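/- arXiv:0710.5212 — 2 statements merged into one kernel-verified Lean document; each statement's English description precedes it below -/
import Mathlib

section
/- If A_f has a component isomorphic to the line (in the sense defined in the context), then f has a singular point: there exists z ∈ ℂ² with J(P,Q)(z) = 0. -/
noncomputable section

/-- The polynomial map `ℂ² → ℂ²` defined by a pair `(P,Q)` of polynomials in
`ℂ[x,y]` (variable `0` is `x`, variable `1` is `y`). -/
def polyMap (P Q : MvPolynomial (Fin 2) ℂ) (z : ℂ × ℂ) : ℂ × ℂ :=
  (MvPolynomial.eval (fun i : Fin 2 => if i = 0 then z.1 else z.2) P,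
   MvPolynomial.eval (fun i : Fin 2 => if i = 0 then z.1 else z.2) Q)

/-- The non-proper value set `A_f` of `f = (P,Q)`: the set of points `b ∈ ℂ²` for which
there is a sequence `z_j → ∞` with `f(z_j) → b`. -/
def nonProperSet (P Q : MvPolynomial (Fin 2) ℂ) : Set (ℂ × ℂ) :=
  {b | ∃ z : ℕ → ℂ × ℂ,
    Filter.Tendsto (fun j => ‖z j‖) Filter.atTop Filter.atTop ∧
    Filter.Tendsto (fun j => polyMap P Q (z j)) Filter.atTop (nhds b)}

/-- The polynomial curve `ℂ → ℂ²` defined by a pair of one-variable polynomials. -/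
def curveMap (γ₁ γ₂ : Polynomial ℂ) (s : ℂ) : ℂ × ℂ := (γ₁.eval s, γ₂.eval s)

/-- The Jacobian `J(P,Q) = P_x Q_y - P_y Q_x`. -/
def Jac (P Q : MvPolynomial (Fin 2) ℂ) : MvPolynomial (Fin 2) ℂ :=
  MvPolynomial.pderiv 0 P * MvPolynomial.pderiv 1 Q
    - MvPolynomial.pderiv 1 P * MvPolynomial.pderiv 0 Q

/-!
If the Jacobian `J` of `f = (P, Q)` has no zero, it is a nonzero constant. By the theorem of
Abhyankar and Moh, finitely many substitutions `(u, v) ↦ (v - c(u), u)` in the target turn the line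
in `A_f` into a vertical line `{r} × ℂ`; they preserve the hypotheses, up to the sign of `J`. So it
is enough to show that `A_f` meets a vertical line in finitely many points.

For that theorem, suppose `ℂ[γ, φ] = ℂ[X]` and measure elements by their pole order at infinity. The
approximate roots of the monic equation of `φ` over `ℂ[γ]` are key polynomials for this valuation;
the last one in the tower is linear, `φ - c(γ)`, and has degree less than `γ`.

By Newton–Puiseux expansion at infinity there are finitely many substitutions
`x = t⁻ᴺ`, `y = t⁻ᴺ (w(t) + tᵏ ξ)` (and the same with `x` and `y` exchanged) such that `P` and `Q`
become polynomials `R` and `S` in `(t, ξ)`, and every point of `A_f` is a value of `(R, S)` on the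
line `t = 0`. If infinitely many of them lie on `{r} × ℂ` then, for one of these substitutions,
`R(0, ξ) = r` is constant but `S(0, ξ)` is not. By the chain rule the Jacobian of `(R, S)` is a
power of `t` times a constant. But the leading monomials of `R` and `S` for a suitable weight
contribute to that Jacobian a monomial in which `ξ` occurs.
-/

section ApproximateRoot

open Polynomial

lemma exists_eq_mul_pow_add {A : Type*} [CommRing A] [Nontrivial A] {G p : A[X]} {e J : ℕ}
    (hG : G.Monic) (he : G.natDegree = e) (hp : p.degree < ((J + 1) * e : ℕ)) :
    ∃ q s : A[X], p = q * G ^ J + s ∧ q.degree < e ∧ s.degree < (J * e : ℕ) := by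
  have hm : (G ^ J).Monic := hG.pow J
  have hdeg : (G ^ J).natDegree = J * e := by rw [hG.natDegree_pow, he]
  refine ⟨p /ₘ G ^ J, p %ₘ G ^ J, ?_, ?_, ?_⟩
  · rw [mul_comm, add_comm, modByMonic_add_div]
  · by_cases h0 : p /ₘ G ^ J = 0
    · simp [h0]
    · have hle : J * e ≤ p.natDegree := by
        by_contra! hlt
        exact h0 ((divByMonic_eq_zero_iff hm).2 (degree_lt_degree (by omega)))
      have hp0 : p ≠ 0 := by rintro rfl; simp at h0
      rw [← natDegree_lt_iff_degree_lt hp0, add_mul] at hp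
      rw [← natDegree_lt_iff_degree_lt h0, natDegree_divByMonic _ hm, hdeg]
      omega
  · rw [← hdeg, ← degree_eq_natDegree hm.ne_zero]
    exact degree_modByMonic_lt p hm

variable {A : Type*} [CommRing A]

/-- `Q` is an approximate `r`-th root of `P`: a monic polynomial of degree `deg P / r` whose
`r`-th power agrees with `P` up to terms of degree less than `(r - 1) * deg Q`. -/
structure IsApproxRoot (r : ℕ) (P Q : A[X]) : Prop where
  monic : Q.Monic
  degree_sub_lt : (P - Q ^ r).degree < ((r - 1) * Q.natDegree : ℕ)

lemma natDegree_add_pow_sub_le {x y : A[X]} {e b : ℕ} (hx : x.natDegree ≤ e)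
    (hy : y.natDegree ≤ b) (hbe : b ≤ e) (n : ℕ) :
    ((x + y) ^ (n + 2) - x ^ (n + 2) - (n + 2 : ℕ) * x ^ (n + 1) * y).natDegree
      ≤ 2 * b + n * e := by
  induction n with
  | zero =>
    rw [show (x + y) ^ (0 + 2) - x ^ (0 + 2) - ((0 + 2 : ℕ) : A[X]) * x ^ (0 + 1) * y = y ^ 2 by
      push_cast; ring]
    simpa using natDegree_pow_le_of_le 2 hy
  | succ n ih =>
    rw [show (x + y) ^ (n + 1 + 2) - x ^ (n + 1 + 2)
          - ((n + 1 + 2 : ℕ) : A[X]) * x ^ (n + 1 + 1) * y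
        = (x + y) * ((x + y) ^ (n + 2) - x ^ (n + 2) - (n + 2 : ℕ) * x ^ (n + 1) * y)
          + (n + 2 : ℕ) * (x ^ (n + 1) * y ^ 2) by push_cast; ring]
    refine natDegree_add_le_of_degree_le ?_ ?_
    · have hxy : (x + y).natDegree ≤ e := natDegree_add_le_of_degree_le hx (hy.trans hbe)
      exact (natDegree_mul_le_of_le hxy ih).trans (by linarith)
    · have hpow := natDegree_mul_le_of_le (natDegree_pow_le_of_le (n + 1) hx)
        (natDegree_pow_le_of_le 2 hy)
      exact (natDegree_mul_le_of_le (natDegree_natCast (R := A) (n + 2)).le hpow).trans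
        (by linarith)

variable {r e : ℕ}

lemma degree_sub_pow_lt_mul [Nontrivial A] {P Q : A[X]} (hP : P.Monic) (hPd : P.natDegree = r * e)
    (hQ : Q.Monic) (hQd : Q.natDegree = e) : (P - Q ^ r).degree < (r * e : ℕ) := by
  have hQr := hQ.pow r
  rw [← hPd, ← degree_eq_natDegree hP.ne_zero]
  refine degree_sub_lt_left ?_ hP.ne_zero (by rw [hP.leadingCoeff, hQr.leadingCoeff])
  rw [degree_eq_natDegree hP.ne_zero, degree_eq_natDegree hQr.ne_zero, hPd, hQ.natDegree_pow, hQd]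

lemma degree_C_mul_lt [Nontrivial A] {u : A} {Q q : A[X]} (hQ : Q.Monic) (hQd : Q.natDegree = e)
    (hq : q.degree < e) : (C u * q).degree < Q.degree := by
  rw [degree_eq_natDegree hQ.ne_zero, hQd]
  exact (C_mul' u q ▸ degree_smul_le u q).trans_lt hq

lemma degree_sub_add_C_mul_pow_lt [Nontrivial A] {u : A} {P Q q s : A[X]}
    (hu : (r : A) * u = 1) (hr : 2 ≤ r) (hQ : Q.Monic) (hQd : Q.natDegree = e)
    (hW : P - Q ^ r = q * Q ^ (r - 1) + s) (hq0 : q ≠ 0) (hq : q.degree < e)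
    (hs : s.degree < ((r - 1) * e : ℕ)) :
    (P - (Q + C u * q) ^ r).degree < (P - Q ^ r).degree := by
  obtain ⟨n, rfl⟩ := Nat.exists_eq_add_of_le' hr
  have hqe : q.natDegree < e := (natDegree_lt_iff_degree_lt hq0).2 hq
  have hE := natDegree_add_pow_sub_le hQd.le (natDegree_C_mul_le u q) hqe.le n
  set E := (Q + C u * q) ^ (n + 2) - Q ^ (n + 2) - (n + 2 : ℕ) * Q ^ (n + 1) * (C u * q) with hEdef
  have hcancel : P - (Q + C u * q) ^ (n + 2) = s - E := by
    have hnu : ((n + 2 : ℕ) : A[X]) * C u = 1 := by rw [← C_eq_natCast, ← C_mul, hu, C_1]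
    rw [show n + 2 - 1 = n + 1 by omega] at hW
    rw [hEdef]
    linear_combination hW - Q ^ (n + 1) * q * hnu
  have hlead : (q * Q ^ (n + 1)).degree = (q.natDegree + (n + 1) * e : ℕ) := by
    have hQn := hQ.pow (n + 1)
    rw [hQn.degree_mul, degree_eq_natDegree hq0, degree_eq_natDegree hQn.ne_zero,
      hQ.natDegree_pow, hQd, Nat.cast_add]
  have hs' : s.degree < (q * Q ^ (n + 1)).degree := by
    rw [hlead]
    exact hs.trans_le (mod_cast Nat.le_add_left _ _)
  rw [hcancel, hW, show n + 2 - 1 = n + 1 by omega, degree_add_eq_left_of_degree_lt hs']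
  refine (degree_sub_le _ _).trans_lt (max_lt hs' ?_)
  rw [hlead]
  refine degree_le_natDegree.trans_lt ?_
  have : (n + 1) * e = n * e + e := by ring
  exact_mod_cast (by omega : E.natDegree < q.natDegree + (n + 1) * e)

lemma exists_isApproxRoot_of_invariant [Nontrivial A] {u : A} {P : A[X]}
    (hu : (r : A) * u = 1) (hr : 2 ≤ r) (hP : P.Monic) (hPd : P.natDegree = r * e)
    (Inv : A[X] → Prop)
    (hInv : ∀ Q q s : A[X], Inv Q → P - Q ^ r = q * Q ^ (r - 1) + s → q ≠ 0 → q.degree < e →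
      s.degree < ((r - 1) * e : ℕ) → Inv (Q + C u * q))
    {Q : A[X]} (hQ : Q.Monic) (hQd : Q.natDegree = e) (hQi : Inv Q) :
    ∃ Q' : A[X], IsApproxRoot r P Q' ∧ Q'.natDegree = e ∧ Inv Q' := by
  induction hn : (P - Q ^ r).degree using WellFoundedLT.induction generalizing Q with
  | _ n ih =>
  have hlt : (P - Q ^ r).degree < ((r - 1 + 1) * e : ℕ) := by
    rw [Nat.sub_add_cancel (by omega)]
    exact degree_sub_pow_lt_mul hP hPd hQ hQd
  obtain ⟨q, s, hW, hq, hs⟩ := exists_eq_mul_pow_add hQ hQd hlt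
  rcases eq_or_ne q 0 with rfl | hq0
  · exact ⟨Q, ⟨hQ, by rwa [hQd, hW, zero_mul, zero_add]⟩, hQd, hQi⟩
  · have hCq : (C u * q).degree < Q.degree := degree_C_mul_lt hQ hQd hq
    exact ih _ (hn ▸ degree_sub_add_C_mul_pow_lt hu hr hQ hQd hW hq0 hq hs)
      (hQ.add_of_left hCq) ((natDegree_add_eq_left_of_degree_lt hCq).trans hQd)
      (hInv Q q s hQi hW hq0 hq hs) rfl

lemma IsApproxRoot.map {B : Type*} [CommRing B] {f : A →+* B} (hf : Function.Injective f)
    {P Q : A[X]} (h : IsApproxRoot r P Q) : IsApproxRoot r (P.map f) (Q.map f) where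
  monic := h.monic.map f
  degree_sub_lt := by
    rw [natDegree_map_eq_of_injective hf, ← Polynomial.map_pow, ← Polynomial.map_sub,
      degree_map_eq_of_injective hf]
    exact h.degree_sub_lt

lemma coeff_sum_range_pow_mul_pow {Y Z : A[X]} (hY : Y.Monic) (hYd : Y.natDegree = e)
    (hZ : Z.Monic) (hZd : Z.natDegree = e) :
    (∑ i ∈ Finset.range r, Y ^ i * Z ^ (r - 1 - i)).coeff ((r - 1) * e) = r := by
  rw [finsetSum_coeff, Finset.sum_congr rfl (g := fun _ => (1 : A)), Finset.sum_const,
    Finset.card_range, nsmul_one]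
  intro i hi
  have hdeg : (Y ^ i * Z ^ (r - 1 - i)).natDegree = (r - 1) * e := by
    rw [(hY.pow i).natDegree_mul (hZ.pow _), hY.natDegree_pow, hZ.natDegree_pow, hYd, hZd,
      ← add_mul, Nat.add_sub_cancel' (by have := Finset.mem_range.1 hi; omega)]
  rw [← hdeg]
  exact ((hY.pow i).mul (hZ.pow _)).coeff_natDegree

lemma IsApproxRoot.unique [IsDomain A] {P Y Z : A[X]} (hr : (r : A) ≠ 0)
    (hY : IsApproxRoot r P Y) (hZ : IsApproxRoot r P Z) (hd : Y.natDegree = Z.natDegree) :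
    Y = Z := by
  by_contra hne
  have hlt : (Y ^ r - Z ^ r).degree < ((r - 1) * Z.natDegree : ℕ) := by
    rw [show Y ^ r - Z ^ r = (P - Z ^ r) - (P - Y ^ r) by ring]
    exact (degree_sub_le _ _).trans_lt (max_lt hZ.degree_sub_lt (hd ▸ hY.degree_sub_lt))
  have hle := le_degree_of_ne_zero
    ((coeff_sum_range_pow_mul_pow hY.monic hd hZ.monic rfl (r := r)).trans_ne hr)
  rw [← geom_sum₂_mul, degree_mul] at hlt
  have hnonneg : 0 ≤ (Y - Z).degree := zero_le_degree_iff.2 (sub_ne_zero.2 hne)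
  exact absurd (hle.trans (le_add_of_nonneg_right hnonneg)) (not_le.2 hlt)

end ApproximateRoot

section KeyPolynomial

open Polynomial WithZero

variable {F : Type*} [Field F] (v : Valuation F ℤᵐ⁰) (φ : F)

/-- All nonzero polynomials of degree less than `e` with coefficients in `A` take at `φ` a nonzero
value whose degree is divisible by `a`. The degree of an element of `F` is the exponent of its
valuation, so `v` is thought of as the pole order at a place at infinity. -/
def DvdDegreesBelow (A : Type*) [CommRing A] [Algebra A F] (e a : ℕ) : Prop :=
  ∀ p : A[X], p ≠ 0 → p.degree < e → ∃ n : ℤ, v (aeval φ p) = exp (a * n)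

variable {v φ} {A : Type*} [CommRing A] [Algebra A F] {e a : ℕ}

lemma DvdDegreesBelow.of_faithfulSMul {R : Type*} [CommRing R] [Algebra R A] [FaithfulSMul R A]
    [Algebra R F] [IsScalarTower R A F] (h : DvdDegreesBelow v φ A e a) :
    DvdDegreesBelow v φ R e a := by
  intro p hp0 hp
  have hinj := FaithfulSMul.algebraMap_injective R A
  rw [← aeval_map_algebraMap A]
  exact h _ ((Polynomial.map_ne_zero_iff hinj).2 hp0)
    ((degree_map_eq_of_injective hinj p).trans_lt hp)

/-- `G` is a key polynomial of degree `e` in the sense of MacLane: polynomials of degree less than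
`e` only see degrees divisible by `a`, while the multiples `j * d` with `0 < j < r` of the degree
`d` of `G` at `φ` are not divisible by `a`. Hence the terms of a `G`-adic expansion of length `r`
have pairwise distinct degrees. -/
structure IsKeyPolynomial (v : Valuation F ℤᵐ⁰) (φ : F) (e a r : ℕ) (d : ℤ) (G : A[X]) : Prop where
  below : DvdDegreesBelow v φ A e a
  monic : G.Monic
  natDegree_eq : G.natDegree = e
  map_eq : v (aeval φ G) = exp d
  not_dvd_mul : ∀ j : ℕ, 0 < j → j < r → ¬ (a : ℤ) ∣ j * d

namespace IsKeyPolynomial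

variable {r : ℕ} {d : ℤ} {G : A[X]} (h : IsKeyPolynomial v φ e a r d G)
include h

lemma map_mul_pow_ne {p q : A[X]} (hp : p ≠ 0) (hpe : p.degree < e) (hq : q ≠ 0)
    (hqe : q.degree < e) {i j : ℕ} (hji : j < i) (hir : i < r) :
    v (aeval φ p) * v (aeval φ G) ^ i ≠ v (aeval φ q) * v (aeval φ G) ^ j := by
  obtain ⟨n, hn⟩ := h.below p hp hpe
  obtain ⟨n', hn'⟩ := h.below q hq hqe
  rw [hn, hn', h.map_eq, ← exp_nsmul, ← exp_nsmul, ← exp_add, ← exp_add, Ne, exp_inj]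
  intro heq
  refine h.not_dvd_mul (i - j) (by omega) (by omega) ⟨n' - n, ?_⟩
  rw [Nat.cast_sub hji.le]
  simp only [nsmul_eq_mul] at heq
  linear_combination heq

lemma exists_map_aeval_eq [Nontrivial A] {J : ℕ} (hJ : J ≤ r) {p : A[X]} (hp0 : p ≠ 0)
    (hp : p.degree < (J * e : ℕ)) :
    ∃ j < J, ∃ q : A[X], q ≠ 0 ∧ q.degree < e ∧
      v (aeval φ p) = v (aeval φ q) * v (aeval φ G) ^ j := by
  induction J generalizing p with
  | zero => simp [hp0] at hp
  | succ J ih =>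
    obtain ⟨q, s, rfl, hq, hs⟩ := exists_eq_mul_pow_add h.monic h.natDegree_eq hp
    have hqG : v (aeval φ (q * G ^ J)) = v (aeval φ q) * v (aeval φ G) ^ J := by simp
    rcases eq_or_ne q 0 with rfl | hq0
    · rw [zero_mul, zero_add] at hp0 ⊢
      obtain ⟨j, hj, hs'⟩ := ih (by omega) hp0 hs
      exact ⟨j, by omega, hs'⟩
    rcases eq_or_ne s 0 with rfl | hs0
    · exact ⟨J, by omega, q, hq0, hq, by rw [add_zero, hqG]⟩
    obtain ⟨j, hj, q', hq'0, hq', hs'⟩ := ih (by omega) hs0 hs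
    have hne := h.map_mul_pow_ne hq0 hq hq'0 hq' hj (by omega)
    rw [map_add, v.map_add_of_distinct_val (by rwa [hqG, hs']), hqG, hs']
    rcases max_choice (v (aeval φ q) * v (aeval φ G) ^ J) (v (aeval φ q') * v (aeval φ G) ^ j)
      with hmax | hmax
    · exact ⟨J, by omega, q, hq0, hq, hmax⟩
    · exact ⟨j, by omega, q', hq'0, hq', hmax⟩

lemma mul_pow_le_map_aeval [Nontrivial A] {J : ℕ} (hJ : J < r) {q s : A[X]} (hq0 : q ≠ 0)
    (hq : q.degree < e) (hs : s.degree < (J * e : ℕ)) :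
    v (aeval φ q) * v (aeval φ G) ^ J ≤ v (aeval φ (q * G ^ J + s)) := by
  have hqG : v (aeval φ (q * G ^ J)) = v (aeval φ q) * v (aeval φ G) ^ J := by simp
  rcases eq_or_ne s 0 with rfl | hs0
  · rw [add_zero, hqG]
  obtain ⟨j, hj, q', hq'0, hq', hs'⟩ := h.exists_map_aeval_eq hJ.le hs0 hs
  have hne := h.map_mul_pow_ne hq0 hq hq'0 hq' hj hJ
  rw [map_add, v.map_add_of_distinct_val (by rwa [hqG, hs']), hqG]
  exact le_max_left _ _

lemma dvdDegreesBelow_mul [Nontrivial A] {g : ℕ} (hga : g ∣ a) (hgd : (g : ℤ) ∣ d) :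
    DvdDegreesBelow v φ A (r * e) g := by
  intro p hp0 hp
  obtain ⟨j, -, q, hq0, hq, hpq⟩ := h.exists_map_aeval_eq le_rfl hp0 hp
  obtain ⟨n, hn⟩ := h.below q hq0 hq
  obtain ⟨k, rfl⟩ := hga
  obtain ⟨l, rfl⟩ := hgd
  refine ⟨k * n + j * l, ?_⟩
  rw [hpq, hn, h.map_eq, ← exp_nsmul, ← exp_add, exp_inj]
  push_cast [nsmul_eq_mul]
  ring

lemma map_aeval_sub_pow [Nontrivial A] {P : A[X]} {g : ℕ} (hga : g ∣ a) (hgd : (g : ℤ) ∣ d)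
    (hP : P.Monic) (hPd : P.natDegree = r * e) (hPv : ∀ n : ℤ, v (aeval φ P) ≠ exp (g * n)) :
    v (aeval φ (P - G ^ r)) = v (aeval φ G) ^ r := by
  have hGr : v (aeval φ (G ^ r)) = exp (r * d) := by simp [h.map_eq, ← exp_nsmul]
  obtain ⟨l, rfl⟩ := hgd
  have hPG : P - G ^ r ≠ 0 := fun h0 => hPv (r * l) (by
    rw [sub_eq_zero.1 h0, hGr, exp_inj]
    ring)
  obtain ⟨n, hn⟩ := h.dvdDegreesBelow_mul hga ⟨l, rfl⟩ _ hPG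
    (degree_sub_pow_lt_mul hP hPd h.monic h.natDegree_eq)
  by_contra hne
  rw [← map_pow, ← map_pow] at hne
  have hmax := v.map_add_of_distinct_val hne
  rw [← map_add, sub_add_cancel, hn, hGr] at hmax
  rcases max_choice (exp ((g : ℤ) * n)) (exp (r * (g * l))) with hm | hm <;> rw [hm] at hmax
  · exact hPv n hmax
  · exact hPv (r * l) (hmax.trans (by rw [exp_inj]; ring))

lemma add_C_mul [Nontrivial A] {P q s : A[X]} {u : A} {g : ℕ} (hr : 2 ≤ r) (hga : g ∣ a)
    (hgd : (g : ℤ) ∣ d) (hP : P.Monic) (hPd : P.natDegree = r * e)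
    (hPv : ∀ n : ℤ, v (aeval φ P) ≠ exp (g * n)) (hu : v (algebraMap A F u) = 1)
    (hW : P - G ^ r = q * G ^ (r - 1) + s) (hq0 : q ≠ 0) (hq : q.degree < e)
    (hs : s.degree < ((r - 1) * e : ℕ)) : IsKeyPolynomial v φ e a r d (G + C u * q) := by
  have hlt : v (aeval φ q) < v (aeval φ G) := by
    have hle := h.mul_pow_le_map_aeval (Nat.sub_lt (by omega) one_pos) hq0 hq hs
    rw [← hW, h.map_aeval_sub_pow hga hgd hP hPd hPv, ← Nat.sub_add_cancel (by omega : 1 ≤ r),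
      pow_succ', Nat.add_sub_cancel] at hle
    refine (le_of_mul_le_mul_right hle (by simp [h.map_eq, zero_lt_iff])).lt_of_ne fun heq => ?_
    obtain ⟨n, hn⟩ := h.below q hq0 hq
    rw [hn, h.map_eq, exp_inj] at heq
    exact h.not_dvd_mul 1 one_pos (by omega) ⟨n, by rw [Nat.cast_one, one_mul, heq]⟩
  have hCq : (C u * q).degree < G.degree := degree_C_mul_lt h.monic h.natDegree_eq hq
  exact { h with
    monic := h.monic.add_of_left hCq
    natDegree_eq := (natDegree_add_eq_left_of_degree_lt hCq).trans h.natDegree_eq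
    map_eq := by
      rw [map_add, v.map_add_eq_of_lt_left (by simpa [hu] using hlt), h.map_eq] }

end IsKeyPolynomial

end KeyPolynomial

section AbhyankarMoh

open Polynomial WithZero Module

lemma exists_map_sum_eq_of_injOn {F Γ₀ ι : Type*} [CommRing F]
    [LinearOrderedCommGroupWithZero Γ₀] (v : Valuation F Γ₀) {s : Finset ι} (hs : s.Nonempty)
    {f : ι → F} (hf : Set.InjOn (fun i => v (f i)) s) : ∃ i ∈ s, v (∑ i ∈ s, f i) = v (f i) := by
  classical
  obtain ⟨i, hi, hmax⟩ := s.exists_max_image (fun i => v (f i)) hs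
  refine ⟨i, hi, v.map_sum_eq_of_lt hi fun j hj => ?_⟩
  obtain ⟨hj, hji⟩ := Finset.mem_sdiff.1 hj
  exact (hmax j hj).lt_of_ne fun h => hji (Finset.mem_singleton.2 (hf hj hi h))

lemma exists_gcd_cofactor {a : ℕ} {d : ℤ} (ha : 0 < a) (had : ¬ (a : ℤ) ∣ d) :
    ∃ g r : ℕ, a = g * r ∧ (g : ℤ) ∣ d ∧ 2 ≤ r ∧
      ∀ j : ℕ, 0 < j → j < r → ¬ (a : ℤ) ∣ j * d := by
  obtain ⟨r, hr⟩ : Int.gcd a d ∣ a := by exact_mod_cast Int.gcd_dvd_left (a : ℤ) d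
  have hg : 0 < Int.gcd a d := Int.gcd_pos_of_ne_zero_left _ (by omega)
  refine ⟨Int.gcd a d, r, hr, Int.gcd_dvd_right _ _, ?_, fun j hj hjr hdvd => ?_⟩
  · rcases r with _ | _ | r
    · omega
    · rw [zero_add, mul_one] at hr
      exact absurd (hr ▸ Int.gcd_dvd_right (a : ℤ) d) had
    · omega
  · have hle : a ∣ j * Int.gcd a d := by
      simpa [Int.gcd_mul_left] using Int.dvd_gcd (dvd_mul_left (a : ℤ) j) hdvd
    rw [mul_comm] at hle
    nth_rw 1 [hr] at hle
    exact absurd (Nat.le_of_dvd hj (Nat.dvd_of_mul_dvd_mul_left hg hle)) (by omega)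

variable (R K : Type*) {F : Type*} [CommRing R] [Field K] [Field F] [Algebra K F] [Algebra R F]

/-- The setting of the Abhyankar–Moh theorem, with `v` the pole order at the place at infinity of
`F`. The extension `F / K` is totally ramified there, all elements of `R[φ]` have poles and some
element of `R[φ]` has a simple pole. The case in mind is `R = k[γ]`, `K = k(γ)` and `F = k(X)` for
polynomials `γ` and `φ` that generate the `k`-algebra `k[X]`. -/
structure AbhyankarMohSetting (v : Valuation F ℤᵐ⁰) (φ : F) : Prop where
  isIntegral : IsIntegral R φ
  exists_map_algebraMap_eq (x : K) :
    x ≠ 0 → ∃ n : ℤ, v (algebraMap K F x) = exp (finrank K F * n)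
  one_le_map_aeval (p : R[X]) : aeval φ p ≠ 0 → 1 ≤ v (aeval φ p)
  exists_map_aeval_eq : ∃ p : R[X], v (aeval φ p) = exp 1

namespace AbhyankarMohSetting

variable {R K} {v : Valuation F ℤᵐ⁰} {φ : F} (S : AbhyankarMohSetting R K v φ)
include S

lemma dvdDegreesBelow_one : DvdDegreesBelow v φ K 1 (finrank K F) := by
  intro p hp0 hp
  rw [eq_C_of_degree_le_zero (Nat.WithBot.lt_one_iff_le_zero.1 hp)] at hp0 ⊢
  rw [aeval_C]
  exact S.exists_map_algebraMap_eq _ (by simpa using hp0)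

lemma map_algebraMap_eq_one {x y : R} (hxy : x * y = 1) : v (algebraMap R F y) = 1 := by
  have hmul : v (algebraMap R F x) * v (algebraMap R F y) = 1 := by
    rw [← map_mul, ← map_mul, hxy, map_one, map_one]
  have hone : ∀ z : R, v (algebraMap R F z) ≠ 0 → 1 ≤ v (algebraMap R F z) := fun z hz => by
    simpa using S.one_le_map_aeval (C z) (by simpa using hz)
  have hx := hone x (left_ne_zero_of_mul_eq_one hmul)
  have hy := hone y (right_ne_zero_of_mul_eq_one hmul)
  exact le_antisymm (by simpa [hmul] using mul_le_mul_left hx (v (algebraMap R F y))) hy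

variable {e a : ℕ}

lemma exists_map_sum_smul_pow_eq {s : F} (hs : v s = exp 1) {T : Finset ℕ}
    (hT : ∀ n ∈ T, n < finrank K F) {x : T → K} (hx : x ≠ 0) :
    ∃ n ∈ T, ∃ k : ℤ, v (∑ n : T, x n • s ^ (n : ℕ)) = exp (finrank K F * k + n) := by
  classical
  have hterm : ∀ n : T, x n ≠ 0 →
      ∃ k : ℤ, v (x n • s ^ (n : ℕ)) = exp (finrank K F * k + (n : ℕ)) := fun n hn => by
    obtain ⟨k, hk⟩ := S.exists_map_algebraMap_eq (x n) hn
    exact ⟨k, by simp [Algebra.smul_def, hk, hs, ← exp_nsmul, exp_add]⟩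
  rw [← Finset.sum_filter_of_ne (p := fun n => x n ≠ 0)
    fun n _ hn h0 => hn (by rw [h0, zero_smul])]
  obtain ⟨n₀, hn₀⟩ := Function.ne_iff.1 hx
  obtain ⟨n, hn, hsum⟩ := exists_map_sum_eq_of_injOn v (f := fun n : T => x n • s ^ (n : ℕ))
    (s := {n | x n ≠ 0}) ⟨n₀, by simpa using hn₀⟩ fun i hi j hj hij => by
      obtain ⟨k, hk⟩ := hterm i (by simpa using hi)
      obtain ⟨l, hl⟩ := hterm j (by simpa using hj)
      simp only [hk, hl, exp_inj] at hij
      have hmod : (i : ℕ) ≡ j [MOD finrank K F] :=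
        Int.natCast_modEq_iff.1 (Int.modEq_iff_dvd.2 ⟨k - l, by linear_combination -hij⟩)
      exact Subtype.ext (hmod.eq_of_lt_of_lt (hT i i.2) (hT j j.2))
  obtain ⟨k, hk⟩ := hterm n (by simpa using hn)
  exact ⟨n, n.2, k, hsum.trans hk⟩

lemma exists_map_aeval_eq_of_card [FiniteDimensional K F] {s : F} (hs : v s = exp 1)
    {T : Finset ℕ} (hT : ∀ n ∈ T, n < finrank K F) (hcard : finrank K F < e + 1 + T.card)
    (hφ : ∀ p : K[X], p ≠ 0 → p.natDegree ≤ e → aeval φ p ≠ 0) :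
    ∃ p : K[X], p.natDegree ≤ e ∧ ∃ n ∈ T, ∃ k : ℤ,
      v (aeval φ p) = exp (finrank K F * k + n) := by
  let f : degreeLT K (e + 1) × (T → K) →ₗ[K] F :=
    ((aeval φ).toLinearMap ∘ₗ (degreeLT K (e + 1)).subtype).coprod
      (Fintype.linearCombination K fun n : T => s ^ (n : ℕ))
  have hfin : finrank K (degreeLT K (e + 1)) = e + 1 := by
    simpa using (degreeLTEquiv K (e + 1)).finrank_eq
  have : FiniteDimensional K (degreeLT K (e + 1)) := .of_finrank_pos (by omega)
  have hker : LinearMap.ker f ≠ ⊥ := f.ker_ne_bot_of_finrank_lt (by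
    rw [finrank_prod, hfin, finrank_fintype_fun_eq_card, Fintype.card_coe]
    exact hcard)
  obtain ⟨⟨p, x⟩, hpx, hne⟩ := Submodule.exists_mem_ne_zero_of_ne_bot hker
  have hsum : aeval φ (p : K[X]) + ∑ n : T, x n • s ^ (n : ℕ) = 0 := hpx
  have hp : (p : K[X]).natDegree ≤ e :=
    natDegree_le_iff_degree_le.2 (mem_degreeLE.1 (degreeLT_succ_eq_degreeLE (R := K) ▸ p.2))
  have hx : x ≠ 0 := by
    rintro rfl
    refine hφ p (fun h0 => hne ?_) hp (by simpa using hsum)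
    exact Prod.ext (Subtype.ext h0) rfl
  obtain ⟨n, hn, k, hk⟩ := S.exists_map_sum_smul_pow_eq hs hT hx
  exact ⟨p, hp, n, hn, k, by rw [eq_neg_of_add_eq_zero_left hsum, v.map_neg, hk]⟩

variable [Algebra R K] [IsScalarTower R K F]

lemma exists_monic_aeval_eq_zero [IsDomain R] [IsIntegrallyClosed R] [IsFractionRing R K]
    [FiniteDimensional K F] :
    ∃ h : R[X], h.Monic ∧ h.natDegree = finrank K F ∧ aeval φ h = 0 := by
  have hle : (minpoly R φ).natDegree ≤ finrank K F := by
    rw [← (minpoly.monic S.isIntegral).natDegree_map (algebraMap R K),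
      ← minpoly.isIntegrallyClosed_eq_field_fractions' K S.isIntegral]
    exact minpoly.natDegree_le φ
  have hmonic := minpoly.monic S.isIntegral
  refine ⟨minpoly R φ * X ^ (finrank K F - (minpoly R φ).natDegree),
    hmonic.mul (monic_X_pow _), ?_, by simp⟩
  rw [hmonic.natDegree_mul (monic_X_pow _), natDegree_X_pow, Nat.add_sub_cancel' hle]

lemma aeval_ne_zero (h : DvdDegreesBelow v φ K e a) (ha : 1 < a) {p : K[X]} (hp0 : p ≠ 0)
    (hp : p.natDegree ≤ e) : aeval φ p ≠ 0 := by
  intro hzero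
  obtain ⟨δ, hδ⟩ := S.exists_map_aeval_eq
  set q := δ.map (algebraMap R K) % p
  have hq : v (aeval φ q) = exp 1 := by
    rw [← hδ, ← aeval_map_algebraMap K φ δ,
      ← EuclideanDomain.mod_add_div (δ.map (algebraMap R K)) p, map_add, map_mul, hzero, zero_mul,
      add_zero]
  have hq0 : q ≠ 0 := by
    intro h0
    rw [h0, map_zero, map_zero] at hq
    exact exp_ne_zero hq.symm
  have hqe : q.degree < e :=
    (degree_mod_lt _ hp0).trans_le (degree_le_natDegree.trans (mod_cast hp))
  obtain ⟨n, hn⟩ := h q hq0 hqe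
  rw [hq, exp_inj] at hn
  exact absurd (Int.eq_one_of_dvd_one (by positivity) ⟨n, hn⟩) (by omega)

lemma exists_monic_map_aeval_eq [FiniteDimensional K F] (h : DvdDegreesBelow v φ K e a)
    (hea : e * a = finrank K F) (ha : 1 < a) :
    ∃ Ψ : K[X], Ψ.Monic ∧ Ψ.natDegree = e ∧ ∃ d : ℤ, v (aeval φ Ψ) = exp d ∧ ¬ (a : ℤ) ∣ d := by
  obtain ⟨δ, hδ⟩ := S.exists_map_aeval_eq
  let T := Finset.range (finrank K F) \ (Finset.range e).image (· * a)
  have hT : ∀ n ∈ T, n < finrank K F ∧ ¬ a ∣ n := fun n hn => by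
    simp only [T, Finset.mem_sdiff, Finset.mem_range, Finset.mem_image, not_exists, not_and] at hn
    refine ⟨hn.1, ?_⟩
    rintro ⟨i, rfl⟩
    refine hn.2 i (Nat.lt_of_mul_lt_mul_left (a := a) ?_) (mul_comm i a)
    rw [mul_comm a e, hea]
    exact hn.1
  have hcard : finrank K F < e + 1 + T.card := by
    have h₁ := Finset.le_card_sdiff ((Finset.range e).image (· * a)) (Finset.range (finrank K F))
    have h₂ := Finset.card_image_le (s := Finset.range e) (f := (· * a))
    rw [Finset.card_range] at h₁ h₂
    change _ ≤ T.card at h₁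
    omega
  obtain ⟨p, hpe, n, hn, k, hk⟩ := S.exists_map_aeval_eq_of_card hδ (fun n hn => (hT n hn).1) hcard
    fun p => S.aeval_ne_zero h ha
  have hp0 : p ≠ 0 := by
    rintro rfl
    simp at hk
  have hdvd : ∀ l : ℤ, ¬ (a : ℤ) ∣ finrank K F * l + n := fun l => by
    rw [← hea, Nat.cast_mul, mul_comm (e : ℤ), mul_assoc, Int.dvd_add_right (dvd_mul_right _ _),
      Int.natCast_dvd_natCast]
    exact (hT n hn).2
  have hpd : p.natDegree = e := hpe.eq_of_not_lt fun hlt => by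
    obtain ⟨l, hl⟩ := h p hp0 ((natDegree_lt_iff_degree_lt hp0).1 hlt)
    rw [hk, exp_inj] at hl
    exact hdvd k ⟨l, hl⟩
  obtain ⟨l, hl⟩ := S.exists_map_algebraMap_eq p.leadingCoeff⁻¹
    (inv_ne_zero (leadingCoeff_ne_zero.2 hp0))
  refine ⟨p * C p.leadingCoeff⁻¹, monic_mul_leadingCoeff_inv hp0,
    (natDegree_mul_leadingCoeff_inv p hp0).trans hpd, _, ?_, hdvd (k + l)⟩
  rw [map_mul, map_mul, aeval_C, hk, hl, ← exp_add, exp_inj]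
  ring

lemma exists_isApproxRoot_map_aeval_eq [Nontrivial R] [FaithfulSMul R K] [Algebra ℚ R]
    {g r : ℕ} {d : ℤ} {Ψ : K[X]} {P : R[X]} (hΨ : IsKeyPolynomial v φ e a r d Ψ) (hr : 2 ≤ r)
    (hga : g ∣ a) (hgd : (g : ℤ) ∣ d) (hP : P.Monic) (hPd : P.natDegree = r * e)
    (hPv : ∀ n : ℤ, v (aeval φ P) ≠ exp (g * n)) :
    ∃ G : R[X], IsApproxRoot r P G ∧ G.natDegree = e ∧ v (aeval φ G) = exp d := by
  obtain ⟨u, hu⟩ : ∃ u : R, (r : R) * u = 1 := ⟨algebraMap ℚ R (r : ℚ)⁻¹, by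
    rw [← map_natCast (algebraMap ℚ R), ← map_mul, mul_inv_cancel₀ (by positivity), map_one]⟩
  have huK : (r : K) * algebraMap R K u = 1 := by
    rw [← map_natCast (algebraMap R K), ← map_mul, hu, map_one]
  have huv : v (algebraMap K F (algebraMap R K u)) = 1 := by
    rw [← IsScalarTower.algebraMap_apply]
    exact S.map_algebraMap_eq_one hu
  have hPK : (P.map (algebraMap R K)).natDegree = r * e := by rw [hP.natDegree_map, hPd]
  obtain ⟨G, hG, hGe, -⟩ := exists_isApproxRoot_of_invariant hu hr hP hPd (fun _ => True)
    (fun _ _ _ _ _ _ _ _ => trivial) (monic_X_pow e) (natDegree_X_pow e) trivial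
  obtain ⟨Q, hQ, hQe, hQv⟩ := exists_isApproxRoot_of_invariant huK hr (hP.map (algebraMap R K))
    hPK (IsKeyPolynomial v φ e a r d)
    (fun Q q s hQ => hQ.add_C_mul hr hga hgd (hP.map _) hPK (by simpa using hPv) huv)
    hΨ.monic hΨ.natDegree_eq hΨ
  have hQG : Q = G.map (algebraMap R K) :=
    hQ.unique (left_ne_zero_of_mul_eq_one huK) (hG.map (FaithfulSMul.algebraMap_injective R K))
      (by rw [hQe, hG.monic.natDegree_map, hGe])
  exact ⟨G, hG, hGe, by rw [← aeval_map_algebraMap K, ← hQG, hQv.map_eq]⟩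

end AbhyankarMohSetting

/-- The information passed down the tower of approximate roots: at the level of degree `e`, where
polynomials of smaller degree only see multiples of `a`, the degree `a` is attained, and some monic
polynomial `P` of degree `e` takes a value of degree less than `a` which is not a multiple of `a`
(possibly the value `0`). -/
structure HasSmallMonicValue (R : Type*) {F : Type*} [CommRing R] [Field F] [Algebra R F]
    (v : Valuation F ℤᵐ⁰) (φ : F) (e a : ℕ) : Prop where
  exists_map_aeval_eq : ∃ p : R[X], p.degree < e ∧ v (aeval φ p) = exp (a : ℤ)
  exists_monic : ∃ P : R[X], P.Monic ∧ P.natDegree = e ∧ v (aeval φ P) < exp (a : ℤ) ∧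
    ∀ n : ℤ, v (aeval φ P) ≠ exp (a * n)

namespace IsKeyPolynomial

variable {R F : Type*} [CommRing R] [Nontrivial R] [Field F] [Algebra R F] {v : Valuation F ℤᵐ⁰}
  {φ : F} {e g r : ℕ} {d : ℤ} {G : R[X]}

lemma eq_of_map_aeval_eq (h : IsKeyPolynomial v φ e (g * r) r d G) (hr : 2 ≤ r) (hg : 0 < g)
    (hgd : (g : ℤ) ∣ d) (hv : ∀ p : R[X], aeval φ p ≠ 0 → 1 ≤ v (aeval φ p)) {p : R[X]}
    (hp : p.degree < (r * e : ℕ)) (hpv : v (aeval φ p) = exp (g : ℤ)) : d = g := by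
  have hnonneg : ∀ {q : R[X]} {n : ℤ}, v (aeval φ q) = exp n → 0 ≤ n := fun {q n} hq => by
    rw [← exp_le_exp, exp_zero, ← hq]
    exact hv q (v.ne_zero_iff.1 (hq ▸ exp_ne_zero))
  have hp0 : p ≠ 0 := by
    rintro rfl
    rw [map_zero, map_zero] at hpv
    exact exp_ne_zero hpv.symm
  obtain ⟨j, -, q, hq0, hq, hpq⟩ := h.exists_map_aeval_eq le_rfl hp0 hp
  obtain ⟨n, hn⟩ := h.below q hq0 hq
  rw [hpv, hn, h.map_eq, ← exp_nsmul, ← exp_add, exp_inj, nsmul_eq_mul] at hpq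
  have hn0 := hnonneg hn
  have hd0 : d ≠ 0 := by
    rintro rfl
    exact h.not_dvd_mul 1 one_pos (by omega) (by simp)
  have hgle : (g : ℤ) ≤ d := Int.le_of_dvd (hd0.symm.lt_of_le (hnonneg h.map_eq)) hgd
  have hj : j ≠ 0 := by
    rintro rfl
    have hdvd : ((g * r : ℕ) : ℤ) ∣ g := ⟨n, by simpa using hpq⟩
    nlinarith [Nat.le_of_dvd hg (Int.natCast_dvd_natCast.1 hdvd)]
  have hj1 : (1 : ℤ) ≤ j := by exact_mod_cast Nat.one_le_iff_ne_zero.2 hj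
  nlinarith

lemma hasSmallMonicValue (h : IsKeyPolynomial v φ e (g * r) r g G) (hr : 2 ≤ r) (hg : 0 < g)
    {P : R[X]} (hG : IsApproxRoot r P G) (hPv : v (aeval φ P) < exp (g : ℤ)) :
    HasSmallMonicValue R v φ e (g * r) := by
  have hga : g < g * r := lt_mul_of_one_lt_right hg hr
  refine ⟨?_, G, h.monic, h.natDegree_eq, ?_, fun n hn => ?_⟩
  · have hGr : v (aeval φ (G ^ r)) = exp ((g * r : ℕ) : ℤ) := by
      rw [map_pow, map_pow, h.map_eq, ← exp_nsmul, nsmul_eq_mul, mul_comm, Nat.cast_mul]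
    have hPGr : v (aeval φ (P - G ^ r)) = exp ((g * r : ℕ) : ℤ) := by
      rw [map_sub, v.map_sub_eq_of_lt_right, hGr]
      rw [hGr]
      exact hPv.trans (exp_lt_exp.2 (mod_cast hga))
    have hPG0 : P - G ^ r ≠ 0 := fun h0 => by
      rw [h0, map_zero, map_zero] at hPGr
      exact exp_ne_zero hPGr.symm
    have hlt := hG.degree_sub_lt
    rw [h.natDegree_eq] at hlt
    obtain ⟨j, hj, q, hq0, hq, hpq⟩ := h.exists_map_aeval_eq (by omega) hPG0 hlt
    obtain ⟨n, hn⟩ := h.below q hq0 hq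
    obtain rfl : j = 0 := by
      by_contra hj0
      refine h.not_dvd_mul j (by omega) (by omega) ⟨1 - n, ?_⟩
      rw [hPGr, hn, h.map_eq, ← exp_nsmul, ← exp_add, exp_inj, nsmul_eq_mul] at hpq
      linear_combination -hpq
    exact ⟨q, hq, by rw [← hPGr, hpq, pow_zero, mul_one]⟩
  · rw [h.map_eq]
    exact exp_lt_exp.2 (mod_cast hga)
  · rw [h.map_eq, exp_inj] at hn
    exact h.not_dvd_mul 1 one_pos (by omega) ⟨n, by rw [Nat.cast_one, one_mul, hn]⟩

end IsKeyPolynomial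

namespace AbhyankarMohSetting

variable {R K F : Type*} [CommRing R] [IsDomain R] [IsIntegrallyClosed R] [Field K] [Field F]
  [Algebra R K] [IsFractionRing R K] [Algebra K F] [Algebra R F] [IsScalarTower R K F]
  [FiniteDimensional K F] {v : Valuation F ℤᵐ⁰} {φ : F} (S : AbhyankarMohSetting R K v φ)
include S

lemma hasSmallMonicValue_finrank_one : HasSmallMonicValue R v φ (finrank K F) 1 := by
  obtain ⟨h, hmonic, hdeg, hzero⟩ := S.exists_monic_aeval_eq_zero
  obtain ⟨δ, hδ⟩ := S.exists_map_aeval_eq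
  refine ⟨⟨δ %ₘ h, ?_, ?_⟩, h, hmonic, hdeg, ?_, fun n => ?_⟩
  · rw [← hdeg, ← degree_eq_natDegree hmonic.ne_zero]
    exact degree_modByMonic_lt δ hmonic
  · rw [aeval_modByMonic_eq_self_of_root hzero, hδ, Nat.cast_one]
  · rw [hzero, map_zero]
    exact exp_pos
  · rw [hzero, map_zero]
    exact exp_ne_zero.symm

variable [Algebra ℚ R]

lemma hasSmallMonicValue {e a : ℕ} (hea : e * a = finrank K F) (h : DvdDegreesBelow v φ K e a) :
    HasSmallMonicValue R v φ e a := by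
  have ha : 0 < a := Nat.pos_of_mul_pos_left (hea ▸ finrank_pos)
  induction a using Nat.strong_induction_on generalizing e with
  | _ a ih =>
  rcases eq_or_lt_of_le' (Nat.one_le_iff_ne_zero.2 ha.ne') with rfl | ha1
  · rw [← mul_one e, hea]
    exact S.hasSmallMonicValue_finrank_one
  obtain ⟨Ψ, hΨ, hΨe, d, hΨd, had⟩ := S.exists_monic_map_aeval_eq h hea ha1
  obtain ⟨g, r, rfl, hgd, hr, hnd⟩ := exists_gcd_cofactor ha had
  have hg : 0 < g := Nat.pos_of_mul_pos_right ha
  have hkey : IsKeyPolynomial v φ e (g * r) r d Ψ := ⟨h, hΨ, hΨe, hΨd, hnd⟩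
  obtain ⟨⟨p, hp, hpv⟩, P, hP, hPd, hPlt, hPv⟩ := ih g (lt_mul_of_one_lt_right hg hr)
    (by rw [← hea]; ring) (hkey.dvdDegreesBelow_mul (dvd_mul_right g r) hgd) hg
  obtain ⟨G, hG, hGe, hGv⟩ := S.exists_isApproxRoot_map_aeval_eq hkey hr (dvd_mul_right g r) hgd
    hP hPd hPv
  have hGkey : IsKeyPolynomial v φ e (g * r) r d G :=
    ⟨h.of_faithfulSMul, hG.monic, hGe, hGv, hnd⟩
  obtain rfl := hGkey.eq_of_map_aeval_eq hr hg hgd S.one_le_map_aeval hp hpv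
  exact hGkey.hasSmallMonicValue hr hg hG hPlt

theorem exists_map_sub_algebraMap_lt :
    ∃ c : R, v (φ - algebraMap R F c) < exp (finrank K F : ℤ) := by
  obtain ⟨P, hP, hPd, hPlt, -⟩ :=
    (S.hasSmallMonicValue (one_mul _) S.dvdDegreesBelow_one).exists_monic
  refine ⟨-P.coeff 0, ?_⟩
  rw [hP.eq_X_add_C hPd] at hPlt
  simpa using hPlt

end AbhyankarMohSetting

lemma exists_aeval_eq_iff_mem_adjoin_pair {k B : Type*} [CommRing k] [CommRing B] [Algebra k B]
    {a b y : B} :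
    (∃ p : (Algebra.adjoin k {a})[X], aeval b p = y) ↔ y ∈ Algebra.adjoin k {a, b} := by
  rw [Set.insert_eq, Algebra.adjoin_union_eq_adjoin_adjoin, Subalgebra.mem_restrictScalars]
  exact (SetLike.ext_iff.1
    (Algebra.adjoin_singleton_eq_range_aeval (Algebra.adjoin k {a}) b) y).symm

lemma isIntegral_adjoin_aeval {k B : Type*} [Field k] [CommRing B] [Nontrivial B] [Algebra k B]
    {γ : k[X]} (hγ : γ.natDegree ≠ 0) (x : B) (φ : k[X]) :
    IsIntegral (Algebra.adjoin k {aeval x γ}) (aeval x φ) := by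
  have hγ0 : γ ≠ 0 := by
    rintro rfl
    simp at hγ
  have hmonic := monic_mul_leadingCoeff_inv hγ0
  have hx : IsIntegral (Algebra.adjoin k {aeval x γ}) x := by
    refine .of_aeval_monic (hmonic.map (algebraMap k _)) ?_ ?_
    · rwa [hmonic.natDegree_map, natDegree_mul_leadingCoeff_inv γ hγ0]
    · rw [aeval_map_algebraMap, map_mul, aeval_C]
      exact isIntegral_algebraMap (x := (⟨_, mul_mem (Algebra.self_mem_adjoin_singleton k _)
        (Subalgebra.algebraMap_mem _ _)⟩ : Algebra.adjoin k {aeval x γ}))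
  have hle : Algebra.adjoin k {x} ≤
      (integralClosure (Algebra.adjoin k {aeval x γ}) B).restrictScalars k :=
    Algebra.adjoin_le (Set.singleton_subset_iff.2 hx)
  exact hle (aeval_mem_adjoin_singleton k x)

section Polynomial

open IntermediateField
open scoped IntermediateField.algebraAdjoinAdjoin

variable {k : Type*} [Field k]

lemma inftyValuation_algebraMap [DecidableEq (RatFunc k)] {p : k[X]} (hp : p ≠ 0) :
    RatFunc.inftyValuation k (algebraMap k[X] (RatFunc k) p) = exp (p.natDegree : ℤ) := by
  rw [RatFunc.inftyValuation_apply, RatFunc.inftyValuation.polynomial k hp]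

lemma aeval_algebraMap_ratFunc (γ p : k[X]) :
    aeval (algebraMap k[X] (RatFunc k) γ) p = algebraMap k[X] (RatFunc k) (p.comp γ) := by
  rw [aeval_algebraMap_apply, comp_eq_aeval]

lemma finrank_adjoin_algebraMap (γ : k[X]) :
    finrank k⟮algebraMap k[X] (RatFunc k) γ⟯ (RatFunc k) = γ.natDegree := by
  rw [RatFunc.finrank_eq_max_natDegree, RatFunc.num_algebraMap, RatFunc.denom_algebraMap,
    natDegree_one, Nat.max_zero]

lemma exists_inftyValuation_eq_of_mem_adjoin [DecidableEq (RatFunc k)] {γ : k[X]}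
    {x : RatFunc k} (hx : x ∈ k⟮algebraMap k[X] (RatFunc k) γ⟯) (hx0 : x ≠ 0) :
    ∃ n : ℤ, RatFunc.inftyValuation k x = exp (γ.natDegree * n) := by
  obtain ⟨p, q, rfl⟩ := (mem_adjoin_simple_iff k x).1 hx
  obtain ⟨hp, hq⟩ := div_ne_zero_iff.1 hx0
  rw [aeval_algebraMap_ratFunc] at hp hq
  rw [map_div₀, aeval_algebraMap_ratFunc, aeval_algebraMap_ratFunc,
    inftyValuation_algebraMap (by rintro h; simp [h] at hp),
    inftyValuation_algebraMap (by rintro h; simp [h] at hq), natDegree_comp, natDegree_comp]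
  exact ⟨p.natDegree - q.natDegree, by rw [← exp_sub, exp_inj]; push_cast; ring⟩

lemma abhyankarMohSetting_inftyValuation [DecidableEq (RatFunc k)] {γ φ : k[X]} {x : RatFunc k}
    (hx : algebraMap k[X] (RatFunc k) γ = x) (hγ : γ.natDegree ≠ 0)
    (hX : X ∈ Algebra.adjoin k {γ, φ}) :
    AbhyankarMohSetting (Algebra.adjoin k {x}) k⟮x⟯ (RatFunc.inftyValuation k)
      (algebraMap k[X] (RatFunc k) φ) := by
  subst hx
  have hmap : Algebra.adjoin k {algebraMap k[X] (RatFunc k) γ, algebraMap k[X] (RatFunc k) φ} =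
      (Algebra.adjoin k {γ, φ}).map (IsScalarTower.toAlgHom k k[X] (RatFunc k)) := by
    rw [AlgHom.map_adjoin, Set.image_pair]
    rfl
  refine ⟨?_, fun x hx => ?_, fun p hp => ?_, ?_⟩
  · have := isIntegral_adjoin_aeval hγ (algebraMap k[X] (RatFunc k) X) φ
    rwa [aeval_algebraMap_ratFunc, aeval_algebraMap_ratFunc, comp_X, comp_X] at this
  · rw [finrank_adjoin_algebraMap]
    exact exists_inftyValuation_eq_of_mem_adjoin x.2 (by simpa using hx)
  · obtain ⟨f, -, hf⟩ := hmap.le (exists_aeval_eq_iff_mem_adjoin_pair.1 ⟨p, rfl⟩)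
    replace hf : algebraMap k[X] (RatFunc k) f = _ := hf
    rw [← hf] at hp ⊢
    rw [inftyValuation_algebraMap (by rintro rfl; simp at hp), ← exp_zero]
    exact exp_le_exp.2 (Nat.cast_nonneg _)
  · obtain ⟨p, hp⟩ := exists_aeval_eq_iff_mem_adjoin_pair.2 (hmap.ge ⟨X, hX, rfl⟩)
    replace hp : _ = algebraMap k[X] (RatFunc k) X := hp
    exact ⟨p, by rw [hp, inftyValuation_algebraMap X_ne_zero, natDegree_X, Nat.cast_one]⟩

theorem exists_natDegree_sub_comp_lt [CharZero k] {γ φ : k[X]} (hγ : γ.natDegree ≠ 0)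
    (hX : X ∈ Algebra.adjoin k {γ, φ}) : ∃ c : k[X], (φ - c.comp γ).natDegree < γ.natDegree := by
  classical
  obtain ⟨x, hx⟩ : ∃ x : RatFunc k, algebraMap k[X] (RatFunc k) γ = x := ⟨_, rfl⟩
  have hxC : ¬ ∃ c, x = RatFunc.C c := by
    rintro ⟨c, hc⟩
    rw [← hx, ← RatFunc.algebraMap_C] at hc
    exact hγ (by rw [RatFunc.algebraMap_injective k hc, natDegree_C])
  have : IsIntegrallyClosed (Algebra.adjoin k {x}) :=
    .of_equiv (algEquivOfTranscendental k x (x.transcendental_of_ne_C hxC)).toRingEquiv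
  have hfin : finrank k⟮x⟯ (RatFunc k) = γ.natDegree := hx ▸ finrank_adjoin_algebraMap γ
  have : FiniteDimensional k⟮x⟯ (RatFunc k) := .of_finrank_pos (by omega)
  obtain ⟨⟨c, hc⟩, hlt⟩ :=
    (abhyankarMohSetting_inftyValuation hx hγ hX).exists_map_sub_algebraMap_lt
  rw [Algebra.adjoin_singleton_eq_range_aeval] at hc
  obtain ⟨c, rfl⟩ := hc
  refine ⟨c, ?_⟩
  replace hlt : RatFunc.inftyValuation k (algebraMap k[X] (RatFunc k) φ - aeval x c) < _ := hlt
  rw [← hx, aeval_algebraMap_ratFunc, ← map_sub, hx, hfin] at hlt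
  rcases eq_or_ne (φ - c.comp γ) 0 with h0 | h0
  · rw [h0, natDegree_zero]
    exact Nat.pos_of_ne_zero hγ
  · rw [inftyValuation_algebraMap h0, exp_lt_exp] at hlt
    exact_mod_cast hlt

end Polynomial

end AbhyankarMoh

section PuiseuxChart

open Polynomial

/-- A truncated Puiseux parametrisation `(t, ξ) ↦ (t ^ q, w(t) + t ^ p * ξ)` of the plane, with
ramification index `q`, center `w` and exponent `p`. The line `t = 0` is the exceptional line. -/
structure PuiseuxChart (K : Type*) [Semiring K] where
  index : ℕ
  index_pos : 0 < index
  center : K[X]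
  exponent : ℕ

namespace PuiseuxChart

variable {K : Type*} [CommSemiring K]

/-- The polynomial map underlying a chart. -/
def toMap (τ : PuiseuxChart K) (z : K × K) : K × K :=
  (z.1 ^ τ.index, τ.center.eval z.1 + z.1 ^ τ.exponent * z.2)

/-- The identity chart. -/
def refl (K : Type*) [CommSemiring K] : PuiseuxChart K := ⟨1, one_pos, 0, 0⟩

/-- The chart parametrising the translation `(t, ξ) ↦ (t, y(t) + ξ)`. -/
def translation (y : K[X]) : PuiseuxChart K := ⟨1, one_pos, y, 0⟩

/-- The chart whose underlying map is `σ ∘ τ`. -/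
def comp (σ τ : PuiseuxChart K) : PuiseuxChart K where
  index := σ.index * τ.index
  index_pos := Nat.mul_pos σ.index_pos τ.index_pos
  center := σ.center.comp (X ^ τ.index) + X ^ (τ.index * σ.exponent) * τ.center
  exponent := τ.index * σ.exponent + τ.exponent

lemma toMap_refl : (refl K).toMap = id := by
  funext z
  simp [toMap, refl]

lemma toMap_comp (σ τ : PuiseuxChart K) : (σ.comp τ).toMap = σ.toMap ∘ τ.toMap := by
  funext z
  ext
  · simp [toMap, comp, ← pow_mul, mul_comm]
  · simp [toMap, comp, eval_comp, pow_add, pow_mul]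
    ring

/-- Substitution of a chart into a polynomial in `t` (inner variable) and `ξ` (outer variable). -/
def pullback (τ : PuiseuxChart K) : K[X][X] →ₐ[K] K[X][X] :=
  aevalAeval (C (X ^ τ.index)) (C τ.center + C (X ^ τ.exponent) * X)

lemma pullback_X (τ : PuiseuxChart K) : τ.pullback X = C τ.center + C (X ^ τ.exponent) * X := by
  simp [pullback]

lemma pullback_C (τ : PuiseuxChart K) (g : K[X]) : τ.pullback (C g) = C (expand K τ.index g) := by
  have h : (τ.pullback.comp CAlgHom : K[X] →ₐ[K] K[X][X]) = CAlgHom.comp (expand K τ.index) := by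
    ext
    simp [pullback]
  exact DFunLike.congr_fun h g

lemma evalEval_pullback (τ : PuiseuxChart K) (G : K[X][X]) (z : K × K) :
    (τ.pullback G).evalEval z.1 z.2 = G.evalEval (τ.toMap z).1 (τ.toMap z).2 := by
  rw [← coe_aevalAeval_eq_evalEval, ← coe_aevalAeval_eq_evalEval, ← AlgHom.comp_apply]
  congr 1
  apply algHom_ext'
  · ext
    simp [pullback, toMap]
  · simp only [AlgHom.comp_apply, pullback_X, toMap, map_add, map_mul, aevalAeval_C, aevalAeval_Y,
      coe_aeval_eq_eval, eval_pow, eval_X]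

lemma pullback_comp (σ τ : PuiseuxChart K) (G : K[X][X]) :
    (σ.comp τ).pullback G = τ.pullback (σ.pullback G) := by
  rw [← AlgHom.comp_apply]
  congr 1
  apply algHom_ext'
  · ext1
    simp [pullback_C, comp, pow_mul']
  · simp only [AlgHom.comp_apply, pullback_X, comp, map_add, map_mul, pullback_C,
      expand_eq_comp_X_pow, pow_comp, X_comp, pow_add, pow_mul]
    ring

lemma pullback_translation (y : K[X]) (G : K[X][X]) :
    (translation y).pullback G = taylor y G := by
  have h : (translation y).pullback = (taylorAlgHom y).restrictScalars K := by
    apply algHom_ext'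
    · ext1
      simp [translation, pullback_C]
    · simp [translation, pullback_X, add_comm]
  exact DFunLike.congr_fun h G

lemma coeff_pullback {τ : PuiseuxChart K} (hτ : τ.center = 0) (G : K[X][X]) (l : ℕ) :
    (τ.pullback G).coeff l = expand K τ.index (G.coeff l) * X ^ (τ.exponent * l) := by
  induction G using Polynomial.induction_on' with
  | add G H hG hH => rw [map_add, coeff_add, hG, hH, coeff_add, map_add, add_mul]
  | monomial n g =>
    rw [← C_mul_X_pow_eq_monomial, map_mul, map_pow, pullback_C, pullback_X, hτ, C_0, zero_add,
      mul_pow, ← C_pow, ← mul_assoc, ← C_mul, coeff_C_mul_X_pow, coeff_C_mul_X_pow]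
    split_ifs with h
    · rw [h, pow_mul]
    · rw [map_zero, zero_mul]

end PuiseuxChart

end PuiseuxChart

section Resolution

open Polynomial Filter Topology

lemma exists_tendsto_or_tendsto_cobounded {α E : Type*} [PseudoMetricSpace E] [ProperSpace E]
    (𝒱 : Ultrafilter α) (f : α → E) :
    (∃ x, Tendsto f 𝒱 (𝓝 x)) ∨ Tendsto f 𝒱 (Bornology.cobounded E) := by
  refine or_iff_not_imp_right.2 fun h => ?_
  obtain ⟨s, hs, hfs⟩ := not_tendsto_iff_exists_frequently_notMem.1 h
  have hbdd : Bornology.IsBounded sᶜ := Bornology.isBounded_def.2 (by rwa [compl_compl])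
  have hmem : closure sᶜ ∈ 𝒱.map f :=
    mem_of_superset (Ultrafilter.frequently_iff_eventually (f := 𝒱).1 hfs) subset_closure
  obtain ⟨x, -, hx⟩ := hbdd.isCompact_closure.ultrafilter_le_nhds' _ hmem
  exact ⟨x, hx⟩

/-- The punctured neighbourhoods of the point `(0, x)` of the exceptional line `t = 0`: points
`(t, ξ)` tending to `(0, x)` with `t ≠ 0`. Ultrafilters finer than it play the role of paths. -/
def nhdsOffLine (x : ℂ) : Filter (ℂ × ℂ) := 𝓝[{z | z.1 ≠ 0}] (0, x)

lemma le_nhdsOffLine {l : Filter (ℂ × ℂ)} {x : ℂ} :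
    l ≤ nhdsOffLine x ↔
      Tendsto Prod.fst l (𝓝 0) ∧ (∀ᶠ z in l, z.1 ≠ 0) ∧ Tendsto Prod.snd l (𝓝 x) := by
  rw [nhdsOffLine, nhdsWithin, le_inf_iff, le_principal_iff, nhds_prod_eq, le_prod]
  exact and_right_comm.trans and_assoc

/-- The ultrafilter `𝒱` lifts through the chart `τ` to an ultrafilter converging to a point
`(0, x)` with `x ∈ S`. -/
def PuiseuxChart.Lifts (τ : PuiseuxChart ℂ) (𝒱 : Ultrafilter (ℂ × ℂ)) (S : Set ℂ) : Prop :=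
  ∃ 𝒲 : Ultrafilter (ℂ × ℂ), ∃ x ∈ S, ↑𝒲 ≤ nhdsOffLine x ∧ 𝒲.map τ.toMap = 𝒱

/-- A finite set `T` of charts resolves the function `G / t ^ a` at the points `(0, x)`, `x ∈ S`:
the function becomes a polynomial in every chart of `T`, and every path converging to one of these
points along which the function has a finite limit lifts to a chart of `T`. -/
structure IsResolution (T : Set (PuiseuxChart ℂ)) (a : ℕ) (G : ℂ[X][X]) (S : Set ℂ) : Prop where
  finite : T.Finite
  dvd : ∀ τ ∈ T, C (X ^ (τ.index * a)) ∣ τ.pullback G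
  lifts : ∀ (𝒱 : Ultrafilter (ℂ × ℂ)), ∀ x ∈ S, ↑𝒱 ≤ nhdsOffLine x → ∀ L : ℂ,
    Tendsto (fun z : ℂ × ℂ => G.evalEval z.1 z.2 / z.1 ^ a) 𝒱 (𝓝 L) → ∃ τ ∈ T, τ.Lifts 𝒱 Set.univ

namespace IsResolution

variable {T : Set (PuiseuxChart ℂ)} {a : ℕ} {G : ℂ[X][X]} {S : Set ℂ}

lemma zero (G : ℂ[X][X]) : IsResolution {PuiseuxChart.refl ℂ} 0 G Set.univ where
  finite := Set.finite_singleton _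
  dvd τ _ := by simp
  lifts 𝒱 x _ hx _ _ := by
    refine ⟨_, rfl, 𝒱, x, trivial, hx, ?_⟩
    rw [PuiseuxChart.toMap_refl, Ultrafilter.map_id]

lemma C_X_mul (h : IsResolution T a G S) : IsResolution T (a + 1) (C X * G) S where
  finite := h.finite
  dvd τ hτ := by
    rw [map_mul, PuiseuxChart.pullback_C, expand_X, mul_add, mul_one, add_comm, pow_add, C_mul]
    exact mul_dvd_mul_left _ (h.dvd τ hτ)
  lifts 𝒱 x hx h𝒱 L hL := by
    refine h.lifts 𝒱 x hx h𝒱 L (hL.congr' ?_)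
    filter_upwards [(le_nhdsOffLine.1 h𝒱).2.1] with z hz
    rw [evalEval_mul, evalEval_C, eval_X, pow_succ']
    exact mul_div_mul_left _ _ hz

lemma biUnion {T : ℂ → Set (PuiseuxChart ℂ)} (hS : S.Finite)
    (h : ∀ x ∈ S, IsResolution (T x) a G {x}) : IsResolution (⋃ x ∈ S, T x) a G S where
  finite := hS.biUnion fun x hx => (h x hx).finite
  dvd τ hτ := by
    obtain ⟨x, hx, hτ⟩ := Set.mem_iUnion₂.1 hτ
    exact (h x hx).dvd τ hτ
  lifts 𝒱 x hx h𝒱 L hL := by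
    obtain ⟨τ, hτ, hlift⟩ := (h x hx).lifts 𝒱 x rfl h𝒱 L hL
    exact ⟨τ, Set.mem_iUnion₂.2 ⟨x, hx, hτ⟩, hlift⟩

lemma comp {σ : PuiseuxChart ℂ} {G' : ℂ[X][X]} {S' : Set ℂ} {b a' : ℕ}
    (hb : b + a' = σ.index * a) (hG : σ.pullback G = C (X ^ b) * G')
    (hσ : ∀ (𝒱 : Ultrafilter (ℂ × ℂ)), ∀ x ∈ S, ↑𝒱 ≤ nhdsOffLine x → ∀ L : ℂ,
      Tendsto (fun z : ℂ × ℂ => G.evalEval z.1 z.2 / z.1 ^ a) 𝒱 (𝓝 L) → σ.Lifts 𝒱 S')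
    (h : IsResolution T a' G' S') : IsResolution (σ.comp '' T) a G S where
  finite := h.finite.image _
  dvd := by
    rintro _ ⟨τ, hτ, rfl⟩
    have hexp : (σ.comp τ).index * a = τ.index * b + τ.index * a' := by
      rw [← mul_add, hb]
      simp only [PuiseuxChart.comp]
      ring
    rw [PuiseuxChart.pullback_comp, hG, map_mul, PuiseuxChart.pullback_C, map_pow (expand ℂ _),
      expand_X, ← pow_mul, hexp, pow_add, C_mul]
    exact mul_dvd_mul_left _ (h.dvd τ hτ)
  lifts 𝒱 x hx h𝒱 L hL := by
    obtain ⟨𝒱', x', hx', h𝒱', rfl⟩ := hσ 𝒱 x hx h𝒱 L hL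
    have hL' : Tendsto (fun z : ℂ × ℂ => G'.evalEval z.1 z.2 / z.1 ^ a') 𝒱' (𝓝 L) := by
      rw [Ultrafilter.coe_map, tendsto_map'_iff] at hL
      refine hL.congr' ?_
      filter_upwards [(le_nhdsOffLine.1 h𝒱').2.1] with z hz
      rw [Function.comp_apply, ← PuiseuxChart.evalEval_pullback, hG, evalEval_mul, evalEval_C,
        eval_pow, eval_X, PuiseuxChart.toMap, ← pow_mul, ← hb, pow_add]
      exact mul_div_mul_left _ _ (pow_ne_zero _ hz)
    obtain ⟨τ, hτ, 𝒲, y, -, h𝒲, rfl⟩ := h.lifts 𝒱' x' hx' h𝒱' L hL'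
    exact ⟨_, ⟨τ, hτ, rfl⟩, 𝒲, y, trivial, h𝒲, by
      rw [Ultrafilter.map_map, PuiseuxChart.toMap_comp]⟩

end IsResolution

end Resolution

section NewtonPolygon

open Polynomial

variable {K : Type*} [Field K]

/-- The restriction `G(0, ξ)` of `G(t, ξ)` to the exceptional line `t = 0`. -/
abbrev restrictToLine (G : K[X][X]) : K[X] := G.map (evalRingHom 0)

lemma eval_zero_eval (G : K[X][X]) (y : K[X]) :
    (G.eval y).eval 0 = (restrictToLine G).eval (y.eval 0) := by
  rw [← coe_evalRingHom, eval_map, eval₂_at_apply]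

lemma eval_zero_coeff_taylor (G : K[X][X]) (y : K[X]) (l : ℕ) :
    ((taylor y G).coeff l).eval 0 = (taylor (y.eval 0) (restrictToLine G)).coeff l := by
  rw [← coe_evalRingHom, ← map_taylor, coeff_map]

lemma coeff_taylor_eq_zero_of_lt_rootMultiplicity {F : K[X]} {x : K} {l : ℕ}
    (hl : l < F.rootMultiplicity x) : (taylor x F).coeff l = 0 :=
  coeff_eq_zero_of_lt_natTrailingDegree
    (by rwa [taylor_apply, ← rootMultiplicity_eq_natTrailingDegree])

lemma coeff_taylor_rootMultiplicity_ne_zero {F : K[X]} (hF : F ≠ 0) (x : K) :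
    (taylor x F).coeff (F.rootMultiplicity x) ≠ 0 := by
  rw [rootMultiplicity_eq_natTrailingDegree, ← taylor_apply]
  exact trailingCoeff_nonzero_iff_nonzero.2 (((taylor_injective x).ne hF).trans_eq (map_zero _))

lemma exists_X_pow_dvd_eval {P : K[X][X]} {x : K} (hx : (restrictToLine P).eval x = 0)
    (hx' : (restrictToLine P.derivative).eval x ≠ 0) (n : ℕ) :
    ∃ y : K[X], y.eval 0 = x ∧ X ^ n ∣ P.eval y := by
  suffices h : ∃ y : K[X], y.eval 0 = x ∧ X ^ (n + 1) ∣ P.eval y from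
    h.imp fun y hy => ⟨hy.1, (pow_dvd_pow X n.le_succ).trans hy.2⟩
  induction n with
  | zero =>
    refine ⟨C x, eval_C, ?_⟩
    rw [zero_add, pow_one, X_dvd_iff, coeff_zero_eq_eval_zero, eval_zero_eval, eval_C, hx]
  | succ n ih =>
    obtain ⟨y, hy, w, hw⟩ := ih
    set lam : K := -w.eval 0 / (P.derivative.eval y).eval 0 with hlam
    have hlin : X ∣ w + P.derivative.eval y * C lam := by
      rw [X_dvd_iff, coeff_zero_eq_eval_zero, eval_add, eval_mul, eval_C, hlam,
        mul_div_cancel₀ _ (by rwa [eval_zero_eval, hy]), add_neg_cancel]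
    obtain ⟨k, hk⟩ := P.binomExpansion y (C lam * X ^ (n + 1))
    refine ⟨y + C lam * X ^ (n + 1), by simp [hy], ?_⟩
    rw [hk, hw, show X ^ (n + 1) * w + P.derivative.eval y * (C lam * X ^ (n + 1)) =
      X ^ (n + 1) * (w + P.derivative.eval y * C lam) by ring, mul_pow, ← mul_assoc]
    refine dvd_add ?_ (Dvd.dvd.mul_left ?_ _)
    · rw [pow_succ _ (n + 1)]
      exact mul_dvd_mul_left _ hlin
    · rw [← pow_mul]
      exact pow_dvd_pow _ (by omega)

-- A Tschirnhaus transformation: the coefficient is `hasseDeriv μ G` evaluated at `y`, and `x` is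
-- a simple root of the restriction of this polynomial to the line.
lemma exists_X_pow_dvd_coeff_taylor [CharZero K] {G : K[X][X]} (hG : restrictToLine G ≠ 0) {x : K}
    {μ : ℕ} (hμ : (restrictToLine G).rootMultiplicity x = μ + 1) (n : ℕ) :
    ∃ y : K[X], y.eval 0 = x ∧ X ^ n ∣ (taylor y G).coeff μ := by
  have hcoeff (l : ℕ) : (restrictToLine (hasseDeriv l G)).eval x =
      (taylor x (restrictToLine G)).coeff l := by
    have h := eval_zero_coeff_taylor G (C x) l
    rwa [taylor_coeff, eval_zero_eval, eval_C] at h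
  simp only [taylor_coeff]
  refine exists_X_pow_dvd_eval ?_ ?_ n
  · rw [hcoeff]
    exact coeff_taylor_eq_zero_of_lt_rootMultiplicity (by omega)
  · have hder : derivative (hasseDeriv μ G) = (μ + 1) • hasseDeriv (μ + 1) G := by
      rw [← hasseDeriv_one, ← LinearMap.comp_apply, hasseDeriv_comp, add_comm 1 μ,
        Nat.choose_one_right, LinearMap.smul_apply]
    rw [hder, restrictToLine, nsmul_eq_mul, Polynomial.map_mul, Polynomial.map_natCast, eval_mul,
      hcoeff, eval_natCast, ← hμ]
    exact mul_ne_zero (by rw [hμ]; exact Nat.cast_ne_zero.2 μ.succ_ne_zero)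
      (coeff_taylor_rootMultiplicity_ne_zero hG x)

lemma rootMultiplicity_lt_of_coeff [CharZero K] {F : K[X]} {m l : ℕ} (hdeg : F.natDegree ≤ m)
    (hm : F.coeff (m - 1) = 0) (hl : l < m) (hFl : F.coeff l ≠ 0) (x : K) :
    F.rootMultiplicity x < m := by
  have hF : F ≠ 0 := by
    rintro rfl
    exact hFl (coeff_zero l)
  by_contra! hle
  have hF' := eq_leadingCoeff_mul_of_monic_of_dvd_of_natDegree_le ((monic_X_sub_C x).pow m)
    ((le_rootMultiplicity_iff hF).1 hle) (by rwa [natDegree_pow, natDegree_X_sub_C, mul_one])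
  have hlc : F.leadingCoeff ≠ 0 := leadingCoeff_ne_zero.2 hF
  have hx : x = 0 := by
    obtain ⟨k, rfl⟩ : ∃ k, m = k + 1 := ⟨m - 1, by omega⟩
    rw [hF', coeff_C_mul, sub_eq_add_neg, ← C_neg, Nat.add_sub_cancel, coeff_X_add_C_pow,
      Nat.add_sub_cancel_left, pow_one, Nat.choose_succ_self_right] at hm
    simpa [hlc, Nat.cast_add_one_ne_zero k] using hm
  rw [hF', hx, C_0, sub_zero, coeff_C_mul, coeff_X_pow, if_neg hl.ne, mul_zero] at hFl
  exact hFl rfl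

lemma exists_le_X_pow_dvd_iff (g : K[X]) (a : ℕ) : ∃ o ≤ a, ∀ n ≤ a, X ^ n ∣ g ↔ n ≤ o := by
  classical
  exact ⟨Nat.findGreatest (X ^ · ∣ g) a, Nat.findGreatest_le a, fun n hn =>
    ⟨fun h => Nat.le_findGreatest (P := (X ^ · ∣ g)) hn h, fun h => (pow_dvd_pow X h).trans
      (Nat.findGreatest_spec (P := (X ^ · ∣ g)) (Nat.zero_le a) (by simp))⟩⟩

lemma exists_min_slope (o : ℕ → ℕ) {m : ℕ} (hm : 0 < m) :
    ∃ l₀ < m, ∀ l < m, o l₀ * (m - l) ≤ (m - l₀) * o l := by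
  obtain ⟨l₀, hl₀, hmin⟩ := Finset.exists_min_image (Finset.range m)
    (fun l => (o l : ℚ) / (m - l : ℕ)) ⟨0, Finset.mem_range.2 hm⟩
  rw [Finset.mem_range] at hl₀
  refine ⟨l₀, hl₀, fun l hl => ?_⟩
  have hle := hmin l (Finset.mem_range.2 hl)
  rw [div_le_div_iff₀ (by simpa using hl₀) (by simpa using hl)] at hle
  rw [mul_comm (m - l₀)]
  exact_mod_cast hle

lemma X_pow_dvd_expand_mul_X_pow {g : K[X]} {o : ℕ} (hg : X ^ o ∣ g) {q p l n : ℕ}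
    (hn : n ≤ q * o + p * l) : X ^ n ∣ expand K q g * X ^ (p * l) := by
  refine (pow_dvd_pow X hn).trans ?_
  rw [pow_add]
  refine mul_dvd_mul_right ?_ _
  simpa [← pow_mul] using map_dvd (expand K q) hg

lemma X_pow_succ_dvd_expand_mul_X_pow {g : K[X]} {q o p l : ℕ} (hq : 0 < q) (hg : X ^ o ∣ g)
    (h : X ^ (q * o + p * l + 1) ∣ expand K q g * X ^ (p * l)) : X ^ (o + 1) ∣ g := by
  obtain ⟨u, rfl⟩ := hg
  rw [map_mul, map_pow, expand_X, ← pow_mul, mul_right_comm, ← pow_add, pow_succ _ (_ + _)] at h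
  have hu := (mul_dvd_mul_iff_left (pow_ne_zero _ X_ne_zero)).1 h
  rw [X_dvd_iff, coeff_zero_eq_eval_zero, expand_eval, zero_pow hq.ne', ← coeff_zero_eq_eval_zero,
    ← X_dvd_iff] at hu
  rw [pow_succ]
  exact mul_dvd_mul_left _ hu

-- `p / q` is the slope of the lower edge at `(m, 0)` of the Newton polygon of `∑ g l * ξ ^ l`
-- truncated at order `a`; the last clause says when that edge ends at a vertex of order below `a`.
lemma exists_newton_slope {g : ℕ → K[X]} {m a : ℕ} (hm : 0 < m) (ha : 0 < a)
    (hg : ∀ l < m, (g l).eval 0 = 0) (hga : X ^ a ∣ g (m - 1)) :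
    ∃ q p : ℕ, 0 < q ∧ 0 < p ∧ p * m ≤ q * a ∧
      (∀ l < m, X ^ (p * m) ∣ expand K q (g l) * X ^ (p * l)) ∧
      (p * m < q * a → X ^ (p * m + 1) ∣ expand K q (g (m - 1)) * X ^ (p * (m - 1)) ∧
        ∃ l < m, ¬ X ^ (p * m + 1) ∣ expand K q (g l) * X ^ (p * l)) := by
  choose o ho_le ho using fun l => exists_le_X_pow_dvd_iff (g l) a
  have hdvd (l : ℕ) : X ^ o l ∣ g l := (ho l _ (ho_le l)).2 le_rfl
  obtain ⟨l₀, hl₀, hmin⟩ := exists_min_slope o hm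
  have hp : 0 < o l₀ :=
    (ho l₀ 1 ha).1 (by rw [pow_one, X_dvd_iff, coeff_zero_eq_eval_zero, hg l₀ hl₀])
  refine ⟨m - l₀, o l₀, by omega, hp, ?_, fun l hl => ?_, fun hlt => ⟨?_, l₀, hl₀, fun h => ?_⟩⟩
  · calc o l₀ * m ≤ (m - l₀) * o 0 := hmin 0 hm
      _ ≤ (m - l₀) * a := Nat.mul_le_mul_left _ (ho_le 0)
  · refine X_pow_dvd_expand_mul_X_pow (hdvd l) ?_
    calc o l₀ * m = o l₀ * (m - l) + o l₀ * l := by rw [← mul_add, Nat.sub_add_cancel hl.le]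
      _ ≤ (m - l₀) * o l + o l₀ * l := Nat.add_le_add_right (hmin l hl) _
  · refine X_pow_dvd_expand_mul_X_pow hga ?_
    obtain ⟨k, rfl⟩ : ∃ k, m = k + 1 := ⟨m - 1, by omega⟩
    rw [Nat.add_sub_cancel]
    nlinarith
  · have ho_lt : o l₀ < a := by
      by_contra! hle
      nlinarith [Nat.sub_le m l₀, ho_le l₀]
    have hexp : o l₀ * m = (m - l₀) * o l₀ + o l₀ * l₀ := by
      rw [mul_comm (m - l₀), ← mul_add, Nat.sub_add_cancel hl₀.le]
    rw [hexp] at h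
    have := (ho l₀ _ ho_lt).1 (X_pow_succ_dvd_expand_mul_X_pow (by omega) (hdvd l₀) h)
    omega

-- Substituting the chart of the lowest edge makes `(restrictToLine H').coeff l` the coefficient
-- of `H` on that edge.
lemma exists_edge_chart {H : K[X][X]} {m a : ℕ} (hm : 0 < m) (ha : 0 < a)
    (hH : ∀ l < m, (H.coeff l).eval 0 = 0) (hHa : X ^ a ∣ H.coeff (m - 1)) :
    ∃ (τ : PuiseuxChart K) (H' : K[X][X]), τ.center = 0 ∧ τ.exponent * m ≤ τ.index * a ∧
      τ.pullback H = C (X ^ (τ.exponent * m)) * H' ∧ (restrictToLine H').natDegree ≤ m ∧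
      (restrictToLine H').coeff m = (H.coeff m).eval 0 ∧
      (τ.exponent * m < τ.index * a → (restrictToLine H').coeff (m - 1) = 0 ∧
        ∃ l < m, (restrictToLine H').coeff l ≠ 0) := by
  obtain ⟨q, p, hq, hp, hpq, hlow, hedge⟩ := exists_newton_slope hm ha hH hHa
  set τ : PuiseuxChart K := ⟨q, hq, 0, p⟩
  have hdvd : C (X ^ (p * m)) ∣ τ.pullback H := by
    refine (C_dvd_iff_dvd_coeff _ _).2 fun l => ?_
    rw [PuiseuxChart.coeff_pullback rfl]
    rcases lt_or_ge l m with hl | hl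
    · exact hlow l hl
    · exact (pow_dvd_pow X (Nat.mul_le_mul_left p hl)).trans (dvd_mul_left _ _)
  obtain ⟨H', hH'⟩ := hdvd
  have hX : (X : K[X]) ^ (p * m) ≠ 0 := pow_ne_zero _ X_ne_zero
  have hcoeff (l : ℕ) : expand K q (H.coeff l) * X ^ (p * l) = X ^ (p * m) * H'.coeff l := by
    rw [← coeff_C_mul, ← hH', PuiseuxChart.coeff_pullback rfl]
  have hzero (l : ℕ) : (restrictToLine H').coeff l = 0 ↔
      X ^ (p * m + 1) ∣ expand K q (H.coeff l) * X ^ (p * l) := by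
    rw [hcoeff, pow_succ, mul_dvd_mul_iff_left hX, X_dvd_iff, coeff_zero_eq_eval_zero, coeff_map,
      coe_evalRingHom]
  refine ⟨τ, H', rfl, hpq, hH', ?_, ?_, fun hlt => ?_⟩
  · refine natDegree_le_iff_coeff_eq_zero.2 fun l hl => (hzero l).2 ?_
    exact (pow_dvd_pow X (Nat.mul_lt_mul_of_pos_left hl hp)).trans (dvd_mul_left _ _)
  · have hm' : H'.coeff m = expand K q (H.coeff m) :=
      mul_left_cancel₀ hX (by rw [← hcoeff, mul_comm])
    rw [coeff_map, hm', coe_evalRingHom, expand_eval, zero_pow hq.ne']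
  · simpa only [ne_eq, hzero] using hedge hlt

end NewtonPolygon

section NewtonPuiseux

open Polynomial Filter Topology

lemma evalEval_eq_sum_range {R : Type*} [CommSemiring R] {G : R[X][X]} {n : ℕ}
    (hG : G.natDegree < n) (t ξ : R) :
    G.evalEval t ξ = ∑ i ∈ Finset.range n, (G.coeff i).eval t * ξ ^ i := by
  simp only [evalEval, eval_eq_sum_range' hG, eval_finsetSum, eval_mul, eval_pow, eval_C]

lemma continuous_evalEval (G : ℂ[X][X]) : Continuous fun z : ℂ × ℂ => G.evalEval z.1 z.2 := by
  simp only [evalEval_eq_sum_range G.natDegree.lt_succ_self]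
  fun_prop

lemma tendsto_zero_of_tendsto_pow_zero {α : Type*} {l : Filter α} {f : α → ℂ} {q : ℕ}
    (hf : Tendsto (fun i => f i ^ q) l (𝓝 0)) : Tendsto f l (𝓝 0) := by
  rw [Metric.tendsto_nhds] at hf ⊢
  intro ε hε
  filter_upwards [hf (ε ^ q) (by positivity)] with i hi
  rw [dist_zero_right] at hi ⊢
  rw [norm_pow] at hi
  exact lt_of_pow_lt_pow_left₀ q hε.le hi

lemma tendsto_evalEval_div_pow {A : ℂ[X][X]} {m : ℕ} (hA : A.natDegree < m)
    {l : Filter (ℂ × ℂ)} {t₀ : ℂ} (hfst : Tendsto Prod.fst l (𝓝 t₀))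
    (hsnd : Tendsto Prod.snd l (Bornology.cobounded ℂ)) :
    Tendsto (fun z : ℂ × ℂ => A.evalEval z.1 z.2 / z.2 ^ m) l (𝓝 0) := by
  simp only [evalEval_eq_sum_range hA, Finset.sum_div, mul_div_assoc]
  rw [← Finset.sum_const_zero (s := Finset.range m)]
  refine tendsto_finsetSum _ fun i hi => ?_
  have hlt : i < m := Finset.mem_range.1 hi
  have hinv : Tendsto (fun z : ℂ × ℂ => z.2⁻¹ ^ (m - i)) l (𝓝 0) := by
    simpa [(Nat.sub_pos_of_lt hlt).ne'] using
      ((tendsto_inv₀_cobounded (α := ℂ)).comp hsnd).pow (m - i)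
  rw [← mul_zero ((A.coeff i).eval t₀)]
  refine (((A.coeff i).continuous.tendsto t₀).comp hfst).mul (hinv.congr' ?_)
  filter_upwards [hsnd.eventually_ne_cobounded 0] with z hz
  rw [← Nat.add_sub_of_le hlt.le, pow_add, Nat.add_sub_cancel_left, inv_pow]
  field_simp

variable {𝒱 : Ultrafilter (ℂ × ℂ)} {x L : ℂ} {a : ℕ}

lemma PuiseuxChart.exists_map_eq (τ : PuiseuxChart ℂ) (h𝒱 : ↑𝒱 ≤ nhdsOffLine x) :
    ∃ 𝒲 : Ultrafilter (ℂ × ℂ), 𝒲.map τ.toMap = 𝒱 ∧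
      Tendsto Prod.fst (𝒲 : Filter (ℂ × ℂ)) (𝓝 0) ∧ ∀ᶠ z in (𝒲 : Filter (ℂ × ℂ)), z.1 ≠ 0 := by
  obtain ⟨hfst, hne, -⟩ := le_nhdsOffLine.1 h𝒱
  have himage : τ.toMap '' {z : ℂ × ℂ | z.1 ≠ 0} ∈ 𝒱 := by
    filter_upwards [hne] with z hz
    obtain ⟨s, hs⟩ := IsAlgClosed.exists_pow_nat_eq z.1 τ.index_pos
    have hs0 : s ≠ 0 := by
      rintro rfl
      exact hz (by rw [← hs, zero_pow τ.index_pos.ne'])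
    refine ⟨(s, (z.2 - τ.center.eval s) / s ^ τ.exponent), hs0, Prod.ext hs ?_⟩
    simp only [toMap]
    field_simp
    ring
  have hmap := Ultrafilter.ofComapInfPrincipal_eq_of_map himage
  refine ⟨_, hmap, ?_, Ultrafilter.ofComapInfPrincipal_mem himage⟩
  rw [← hmap, Ultrafilter.coe_map, tendsto_map'_iff] at hfst
  exact tendsto_zero_of_tendsto_pow_zero hfst

lemma PuiseuxChart.lifts_translation {y : ℂ[X]} (h𝒱 : ↑𝒱 ≤ nhdsOffLine (y.eval 0)) :
    (translation y).Lifts 𝒱 {0} := by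
  obtain ⟨𝒲, rfl, hfst, hne⟩ := (translation y).exists_map_eq h𝒱
  refine ⟨𝒲, 0, rfl, le_nhdsOffLine.2 ⟨hfst, hne, ?_⟩, rfl⟩
  have hsnd := (le_nhdsOffLine.1 h𝒱).2.2
  rw [Ultrafilter.coe_map, tendsto_map'_iff] at hsnd
  simpa [toMap, translation, Function.comp_def] using
    hsnd.sub ((y.continuous.tendsto 0).comp hfst)

lemma PuiseuxChart.exists_eq_add_X_pow_mul {τ : PuiseuxChart ℂ} (hτ : τ.center = 0)
    {H H' : ℂ[X][X]} {m : ℕ} (hm : 0 < m)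
    (hH' : τ.pullback H = C (X ^ (τ.exponent * m)) * H') :
    ∃ A B : ℂ[X][X], A.natDegree < m ∧ B.evalEval 0 0 = (H.coeff m).eval 0 ∧
      H' = A + X ^ m * τ.pullback B := by
  have hmonic : Monic (X ^ m : ℂ[X][X]) := monic_X_pow m
  have hdeg : (H %ₘ X ^ m).natDegree < m := by
    simpa using natDegree_modByMonic_lt H hmonic fun h =>
      hm.ne' (by simpa using congrArg natDegree h)
  set B := H /ₘ X ^ m
  have hH : H %ₘ X ^ m + X ^ m * B = H := modByMonic_add_div H (X ^ m)
  have hA : C (X ^ (τ.exponent * m)) * (H' - X ^ m * τ.pullback B) = τ.pullback (H %ₘ X ^ m) := by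
    rw [mul_sub, ← hH', eq_sub_iff_add_eq.2 hH, map_sub, map_mul, map_pow τ.pullback,
      pullback_X, hτ]
    simp only [C_0, zero_add, C_pow]
    ring
  refine ⟨H' - X ^ m * τ.pullback B, B, ?_, ?_, by ring⟩
  · refine (Nat.le_sub_one_iff_lt hm).1 (natDegree_le_iff_coeff_eq_zero.2 fun l hl => ?_)
    have hl' := congrArg (coeff · l) hA
    simp only [coeff_C_mul, coeff_pullback hτ, coeff_eq_zero_of_natDegree_lt
      (hdeg.trans_le (Nat.le_of_pred_lt hl)), map_zero, zero_mul] at hl'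
    exact (mul_eq_zero.1 hl').resolve_left (pow_ne_zero _ X_ne_zero)
  · have hm' := congrArg (coeff · m) hH
    simp only [coeff_add, coeff_eq_zero_of_natDegree_lt hdeg, zero_add, coeff_X_pow_mul'] at hm'
    rw [← hm']
    simp [evalEval, coeff_zero_eq_eval_zero]

lemma PuiseuxChart.lifts_of_edge {τ : PuiseuxChart ℂ} (hτ : τ.center = 0) {H H' : ℂ[X][X]} {m : ℕ}
    (hm : 0 < m) (hexp : τ.exponent * m ≤ τ.index * a)
    (hH' : τ.pullback H = C (X ^ (τ.exponent * m)) * H') (hHm : (H.coeff m).eval 0 ≠ 0)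
    (h𝒱 : ↑𝒱 ≤ nhdsOffLine 0)
    (hL : Tendsto (fun z : ℂ × ℂ => H.evalEval z.1 z.2 / z.1 ^ a) 𝒱 (𝓝 L)) :
    τ.Lifts 𝒱 Set.univ := by
  obtain ⟨𝒲, rfl, hfst, hne⟩ := τ.exists_map_eq h𝒱
  obtain ⟨ξ, hξ⟩ | hinf := exists_tendsto_or_tendsto_cobounded 𝒲 Prod.snd
  · exact ⟨𝒲, ξ, trivial, le_nhdsOffLine.2 ⟨hfst, hne, hξ⟩, rfl⟩
  obtain ⟨A, B, hA, hB, hAB⟩ := exists_eq_add_X_pow_mul hτ hm hH'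
  have hinf0 : ∀ᶠ z in (𝒲 : Filter (ℂ × ℂ)), z.2 ≠ 0 := hinf.eventually_ne_cobounded 0
  have hinv : Tendsto (fun z : ℂ × ℂ => 1 / z.2 ^ m) 𝒲 (𝓝 0) := by
    simpa using tendsto_evalEval_div_pow (A := 1) (by simpa using hm) hfst hinf
  -- `H'` is bounded along `𝒲`, because `H / t ^ a` is and `p * m ≤ q * a`.
  have hlim₁ : Tendsto (fun z : ℂ × ℂ => H'.evalEval z.1 z.2 / z.2 ^ m) 𝒲 (𝓝 0) := by
    rw [Ultrafilter.coe_map, tendsto_map'_iff] at hL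
    have h := (hL.mul (hfst.pow (τ.index * a - τ.exponent * m))).mul hinv
    rw [mul_zero] at h
    refine h.congr' ?_
    filter_upwards [hne] with z hz
    rw [Function.comp_apply, ← evalEval_pullback, hH', evalEval_mul, evalEval_C, eval_pow, eval_X,
      toMap, ← pow_mul, ← Nat.add_sub_of_le hexp, pow_add, Nat.add_sub_cancel_left]
    field_simp
  have hlim₂ : Tendsto (fun z : ℂ × ℂ => H'.evalEval z.1 z.2 / z.2 ^ m) 𝒲
      (𝓝 ((H.coeff m).eval 0)) := by
    rw [← hB]
    have hτz : Tendsto τ.toMap 𝒲 (𝓝 (0, 0)) := by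
      rw [nhds_prod_eq]
      exact (tendsto_prod_iff'.2 ⟨(le_nhdsOffLine.1 h𝒱).1, (le_nhdsOffLine.1 h𝒱).2.2⟩)
    have h := (tendsto_evalEval_div_pow hA hfst hinf).add
      (((continuous_evalEval B).tendsto (0, 0)).comp hτz)
    rw [zero_add] at h
    refine h.congr' ?_
    filter_upwards [hinf0] with z hz
    rw [hAB, evalEval_add, evalEval_mul, evalEval_pow, evalEval_X, evalEval_pullback, add_div,
      mul_div_cancel_left₀ _ (pow_ne_zero m hz), Function.comp_apply]
  exact absurd (tendsto_nhds_unique hlim₂ hlim₁) hHm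

lemma exists_isResolution_singleton {G : ℂ[X][X]} {μ : ℕ} (ha : 0 < a)
    (hG : restrictToLine G ≠ 0) (hμ : (restrictToLine G).rootMultiplicity x = μ + 1)
    (ih : ∀ (a' : ℕ) (G' : ℂ[X][X]), restrictToLine G' ≠ 0 →
      (∀ y, (restrictToLine G').rootMultiplicity y ≤ μ) → ∃ T, IsResolution T a' G' Set.univ) :
    ∃ T, IsResolution T a G {x} := by
  obtain ⟨y, rfl, hy⟩ := exists_X_pow_dvd_coeff_taylor hG hμ a
  have hlow : ∀ l < μ + 1, ((taylor y G).coeff l).eval 0 = 0 := fun l hl => by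
    rw [eval_zero_coeff_taylor, coeff_taylor_eq_zero_of_lt_rootMultiplicity (hμ ▸ hl)]
  have hlead : ((taylor y G).coeff (μ + 1)).eval 0 ≠ 0 := by
    rw [eval_zero_coeff_taylor, ← hμ]
    exact coeff_taylor_rootMultiplicity_ne_zero hG _
  obtain ⟨τ, G', hτ, hexp, hG', hdeg, -, hedge⟩ := exists_edge_chart μ.succ_pos ha hlow hy
  obtain ⟨T, hT⟩ : ∃ T, IsResolution T (τ.index * a - τ.exponent * (μ + 1)) G' Set.univ := by
    rcases hexp.eq_or_lt with heq | hlt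
    · rw [heq, Nat.sub_self]
      exact ⟨_, .zero G'⟩
    · obtain ⟨hμG', l, hl, hlG'⟩ := hedge hlt
      exact ih _ _ (fun h => hlG' (by rw [h, coeff_zero])) fun z =>
        Nat.lt_succ_iff.1 (rootMultiplicity_lt_of_coeff hdeg hμG' hl hlG' z)
  have hT' : IsResolution (τ.comp '' T) a (taylor y G) {0} :=
    hT.comp (Nat.add_sub_of_le hexp) hG' fun 𝒱 z hz h𝒱 L hL =>
      PuiseuxChart.lifts_of_edge hτ μ.succ_pos hexp hG' hlead (Set.mem_singleton_iff.1 hz ▸ h𝒱) hL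
  refine ⟨_, hT'.comp (b := 0) (σ := .translation y) ?_ ?_ fun 𝒱 z hz h𝒱 _ _ =>
    PuiseuxChart.lifts_translation (Set.mem_singleton_iff.1 hz ▸ h𝒱)⟩
  · rw [PuiseuxChart.translation, zero_add, one_mul]
  · rw [PuiseuxChart.pullback_translation, pow_zero, C_1, one_mul]

lemma isRoot_of_tendsto_div_pow {G : ℂ[X][X]} (ha : 0 < a) (h𝒱 : ↑𝒱 ≤ nhdsOffLine x)
    (hL : Tendsto (fun z : ℂ × ℂ => G.evalEval z.1 z.2 / z.1 ^ a) 𝒱 (𝓝 L)) :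
    (restrictToLine G).IsRoot x := by
  obtain ⟨hfst, hne, hsnd⟩ := le_nhdsOffLine.1 h𝒱
  have hzero : Tendsto (fun z : ℂ × ℂ => G.evalEval z.1 z.2) 𝒱 (𝓝 0) := by
    have h := hL.mul (hfst.pow a)
    rw [zero_pow ha.ne', mul_zero] at h
    refine h.congr' ?_
    filter_upwards [hne] with z hz
    exact div_mul_cancel₀ _ (pow_ne_zero a hz)
  have hlim := ((continuous_evalEval G).tendsto (0, x)).comp
    ((tendsto_prod_iff'.2 ⟨hfst, hsnd⟩).trans_eq nhds_prod_eq.symm)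
  rw [IsRoot.def, ← tendsto_nhds_unique hlim hzero, evalEval, eval_zero_eval, eval_C]

lemma exists_isResolution_of_restrictToLine_ne_zero (d a : ℕ) {G : ℂ[X][X]}
    (hG : restrictToLine G ≠ 0) (hd : ∀ x, (restrictToLine G).rootMultiplicity x ≤ d) :
    ∃ T, IsResolution T a G Set.univ := by
  induction d using Nat.strong_induction_on generalizing a G with
  | _ d ih =>
    rcases a.eq_zero_or_pos with rfl | ha
    · exact ⟨_, .zero G⟩
    have hroot : ∀ x ∈ {x | (restrictToLine G).IsRoot x}, ∃ T, IsResolution T a G {x} := by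
      intro x hx
      obtain ⟨μ, hμ⟩ := Nat.exists_eq_succ_of_ne_zero ((rootMultiplicity_pos hG).2 hx).ne'
      exact exists_isResolution_singleton ha hG hμ fun a' G' hG' hμ' =>
        ih μ (by have := hd x; omega) a' hG' hμ'
    choose! T hT using hroot
    have hres := IsResolution.biUnion (finite_setOfPred_isRoot hG) hT
    exact ⟨_, hres.finite, hres.dvd, fun 𝒱 x _ h𝒱 L hL =>
      hres.lifts 𝒱 x (isRoot_of_tendsto_div_pow ha h𝒱 hL) h𝒱 L hL⟩

theorem exists_isResolution (a : ℕ) (G : ℂ[X][X]) : ∃ T, IsResolution T a G Set.univ := by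
  induction a generalizing G with
  | zero => exact ⟨_, .zero G⟩
  | succ a ih =>
    by_cases hG : restrictToLine G = 0
    · obtain ⟨G', rfl⟩ : C X ∣ G := by
        refine (C_dvd_iff_dvd_coeff _ _).2 fun i => ?_
        rw [X_dvd_iff, coeff_zero_eq_eval_zero, ← coe_evalRingHom, ← coeff_map]
        exact (congrArg (coeff · i) hG).trans (coeff_zero i)
      obtain ⟨T, hT⟩ := ih G'
      exact ⟨T, hT.C_X_mul⟩
    · exact exists_isResolution_of_restrictToLine_ne_zero _ _ hG fun x =>
        (count_roots _).symm.trans_le ((Multiset.count_le_card x _).trans (card_roots' _))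

end NewtonPuiseux

section LeadingTerm

open MvPolynomial

lemma uniqueAdd_of_forall_le {M Γ : Type*} [AddZeroClass M] [AddCommMonoid Γ] [LinearOrder Γ]
    [IsOrderedCancelAddMonoid Γ] {φ : M →+ Γ} (hφ : Function.Injective φ) {s t : Finset M}
    {m n : M} (hs : ∀ p ∈ s, φ p ≤ φ m) (ht : ∀ q ∈ t, φ q ≤ φ n) : UniqueAdd s t m n := by
  intro p q hp hq h
  have hsum := congrArg φ h
  rw [map_add, map_add] at hsum
  exact ((add_eq_add_iff_eq_and_eq (hs p hp) (ht q hq)).1 hsum).imp (@hφ _ _) (@hφ _ _)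

lemma coeff_X_mul_pderiv {σ R : Type*} [CommSemiring R] (i : σ) (F : MvPolynomial σ R)
    (m : σ →₀ ℕ) : coeff m (X i * pderiv i F) = m i * coeff m F := by
  classical
  induction F using MvPolynomial.induction_on' with
  | monomial n r =>
    rw [X_mul_pderiv_monomial, coeff_smul, coeff_monomial, nsmul_eq_mul]
    split_ifs with h
    · rw [h]
    · rw [mul_zero, mul_zero]
  | add F G hF hG => rw [map_add, mul_add, coeff_add, hF, hG, coeff_add, mul_add]

lemma support_X_mul_pderiv_subset {σ R : Type*} [CommSemiring R] (i : σ) (F : MvPolynomial σ R) :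
    (X i * pderiv i F).support ⊆ F.support := by
  intro m hm
  rw [mem_support_iff, coeff_X_mul_pderiv] at hm
  exact mem_support_iff.2 (right_ne_zero_of_mul hm)

lemma coeff_add_Jac_mul_X_mul_X {F G : MvPolynomial (Fin 2) ℂ} {m n : Fin 2 →₀ ℕ}
    (h : UniqueAdd F.support G.support m n) :
    coeff (m + n) (Jac F G * X 0 * X 1) =
      ((m 0 * n 1 - m 1 * n 0 : ℤ) : ℂ) * (coeff m F * coeff n G) := by
  have hmul (i j : Fin 2) : coeff (m + n) ((X i * pderiv i F) * (X j * pderiv j G)) =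
      (m i * coeff m F) * (n j * coeff n G) := by
    rw [← coeff_X_mul_pderiv, ← coeff_X_mul_pderiv]
    exact AddMonoidAlgebra.coeff_mul_add_of_uniqueAdd
      (h.mono (support_X_mul_pderiv_subset i F) (support_X_mul_pderiv_subset j G))
  have hJac : Jac F G * X 0 * X 1 = (X 0 * pderiv 0 F) * (X 1 * pderiv 1 G) -
      (X 1 * pderiv 1 F) * (X 0 * pderiv 0 G) := by
    rw [Jac]
    ring
  rw [hJac, coeff_sub, hmul, hmul]
  push_cast
  ring

/-- The weight `(m₀ p₁ - m₁ p₀, p₁)` of an exponent `p`, ordered lexicographically. Its first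
component is constant on the lines of the exponent plane parallel to the one through `0` and `m`. -/
def lexWeight (m : Fin 2 →₀ ℕ) : (Fin 2 →₀ ℕ) →+ ℤ ×ₗ ℤ where
  toFun p := toLex (m 0 * p 1 - m 1 * p 0, (p 1 : ℤ))
  map_zero' := by simp
  map_add' p q := by
    rw [← toLex_add, Prod.mk_add_mk, Finsupp.add_apply, Finsupp.add_apply]
    congr 2
    push_cast
    ring

lemma lexWeight_le_lexWeight {m p q : Fin 2 →₀ ℕ} : lexWeight m p ≤ lexWeight m q ↔
    (m 0 * p 1 - m 1 * p 0 : ℤ) < m 0 * q 1 - m 1 * q 0 ∨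
      (m 0 * p 1 - m 1 * p 0 : ℤ) = m 0 * q 1 - m 1 * q 0 ∧ p 1 ≤ q 1 := by
  simp [lexWeight, Prod.Lex.toLex_le_toLex]

lemma lexWeight_injective {m : Fin 2 →₀ ℕ} (hm : m 1 ≠ 0) : Function.Injective (lexWeight m) := by
  intro p q h
  obtain ⟨h0, h1⟩ : (m 0 * p 1 - m 1 * p 0 : ℤ) = m 0 * q 1 - m 1 * q 0 ∧ (p 1 : ℤ) = q 1 :=
    Prod.mk_inj.1 (toLex.injective h)
  rw [h1, sub_right_inj, mul_right_inj' (Nat.cast_ne_zero.2 hm)] at h0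
  ext i
  fin_cases i
  · exact_mod_cast h0
  · exact_mod_cast h1

-- The exponent sought minimises the slope `m₀ / m₁`, then maximises `m₁`.
lemma exists_forall_lexWeight_le {s : Finset (Fin 2 →₀ ℕ)} (hs : ∃ m ∈ s, m 1 ≠ 0) :
    ∃ m ∈ s, m 1 ≠ 0 ∧ ∀ p ∈ s, lexWeight m p ≤ lexWeight m m := by
  obtain ⟨m, hm, hmax⟩ := Finset.exists_max_image {m ∈ s | m 1 ≠ 0}
    (fun m => toLex (-(m 0 / m 1 : ℚ), m 1)) (hs.imp fun m hm => Finset.mem_filter.2 hm)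
  obtain ⟨hms, hm1⟩ := Finset.mem_filter.1 hm
  refine ⟨m, hms, hm1, fun p hp => lexWeight_le_lexWeight.2 ?_⟩
  rcases eq_or_ne (p 1) 0 with hp1 | hp1
  · have hle : (m 0 * p 1 - m 1 * p 0 : ℤ) ≤ m 0 * m 1 - m 1 * m 0 := by
      rw [hp1, Nat.cast_zero, mul_zero, zero_sub, mul_comm (m 1 : ℤ) (m 0), sub_self]
      exact neg_nonpos.2 (by positivity)
    exact hle.lt_or_eq.imp_right fun h => ⟨h, hp1 ▸ Nat.zero_le _⟩
  · have hle := hmax p (Finset.mem_filter.2 ⟨hp, hp1⟩)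
    have hm1' : (0 : ℚ) < m 1 := by positivity
    have hp1' : (0 : ℚ) < p 1 := by positivity
    rw [Prod.Lex.toLex_le_toLex, neg_lt_neg_iff, neg_inj, div_lt_div_iff₀ hm1' hp1',
      div_eq_div_iff hp1'.ne' hm1'.ne'] at hle
    norm_cast at hle
    zify at hle
    exact hle.imp (fun h => by linarith) fun h => ⟨by linarith, by exact_mod_cast h.2⟩

theorem exists_mem_support_Jac {F G : MvPolynomial (Fin 2) ℂ}
    (hF : ∀ m ∈ F.support, m 0 = 0 → m 1 = 0) (hF1 : ∃ m ∈ F.support, m 1 ≠ 0)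
    (hG : ∃ n ∈ G.support, n 0 = 0 ∧ n 1 ≠ 0) : ∃ p ∈ (Jac F G).support, p 1 ≠ 0 := by
  obtain ⟨m, hm, hm1, hmax⟩ := exists_forall_lexWeight_le hF1
  obtain ⟨n', hn', hn'0, hn'1⟩ := hG
  obtain ⟨n, hn, hnmax⟩ := G.support.exists_max_image (lexWeight m) ⟨n', hn'⟩
  have hpos : (0 : ℤ) < m 0 * n 1 - m 1 * n 0 := by
    have hm0 : m 0 ≠ 0 := mt (hF m hm) hm1
    calc (0 : ℤ) < m 0 * n' 1 := by positivity
      _ = m 0 * n' 1 - m 1 * n' 0 := by rw [hn'0, Nat.cast_zero, mul_zero, sub_zero]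
      _ ≤ m 0 * n 1 - m 1 * n 0 :=
        (lexWeight_le_lexWeight.1 (hnmax n' hn')).elim le_of_lt fun h => h.1.le
  have hsupp : m + n ∈ (Jac F G * X 0 * X 1).support := by
    rw [mem_support_iff,
      coeff_add_Jac_mul_X_mul_X (uniqueAdd_of_forall_le (lexWeight_injective hm1) hmax hnmax)]
    exact mul_ne_zero (Int.cast_ne_zero.2 hpos.ne')
      (mul_ne_zero (mem_support_iff.1 hm) (mem_support_iff.1 hn))
  simp only [support_mul_X, Finset.mem_map, addRightEmbedding_apply] at hsupp
  obtain ⟨_, ⟨p, hp, rfl⟩, hsum⟩ := hsupp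
  refine ⟨p, hp, fun hp1 => ?_⟩
  have h1 : 1 = m 1 + n 1 := by simpa [hp1] using DFunLike.congr_fun hsum 1
  obtain ⟨hm1', hn1⟩ : m 1 = 1 ∧ n 1 = 0 := by omega
  rw [hn1, hm1'] at hpos
  push_cast at hpos
  linarith

end LeadingTerm

section Jacobian

open MvPolynomial Filter Topology

/-- The assignment of the coordinates of a point of the plane to the variables `0` and `1`. -/
def coords {R : Type*} (z : R × R) : Fin 2 → R := fun i => if i = 0 then z.1 else z.2

@[simp] lemma coords_zero {R : Type*} (z : R × R) : coords z 0 = z.1 := rfl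

@[simp] lemma coords_one {R : Type*} (z : R × R) : coords z 1 = z.2 := rfl

lemma coords_apply_zero_one {R : Type*} (x : Fin 2 → R) : coords (x 0, x 1) = x := by
  ext i
  fin_cases i <;> rfl

lemma eval_aeval_coords (F : MvPolynomial (Fin 2) ℂ) (u v : Polynomial ℂ) (s : ℂ) :
    (aeval (coords (u, v)) F).eval s = eval (coords (u.eval s, v.eval s)) F := by
  have h : (Polynomial.evalRingHom s : Polynomial ℂ →+* ℂ).comp (aeval (coords (u, v))).toRingHom =
      eval (coords (u.eval s, v.eval s)) := by
    ext i
    · simp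
    · fin_cases i <;> simp
  exact RingHom.congr_fun h F

lemma eval_Jac (P Q : MvPolynomial (Fin 2) ℂ) (x : Fin 2 → ℂ) : eval x (Jac P Q) =
    eval x (pderiv 0 P) * eval x (pderiv 1 Q) - eval x (pderiv 1 P) * eval x (pderiv 0 Q) := by
  rw [Jac, map_sub, map_mul, map_mul]

lemma hasDerivAt_eval_coords (F : MvPolynomial (Fin 2) ℂ) {u v : ℂ → ℂ} {u' v' s : ℂ}
    (hu : HasDerivAt u u' s) (hv : HasDerivAt v v' s) :
    HasDerivAt (fun s => eval (coords (u s, v s)) F)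
      (eval (coords (u s, v s)) (pderiv 0 F) * u' + eval (coords (u s, v s)) (pderiv 1 F) * v')
      s := by
  induction F using MvPolynomial.induction_on with
  | C a => simpa using hasDerivAt_const s a
  | add F G hF hG =>
    simp only [map_add]
    exact (hF.add hG).congr_deriv (by ring)
  | mul_X F i hF =>
    have hi : HasDerivAt (fun s => coords (u s, v s) i) (coords (u', v') i) s := by
      fin_cases i
      exacts [hu, hv]
    simp only [map_mul, eval_X]
    refine (hF.mul hi).congr_deriv ?_
    fin_cases i <;> simp [pderiv_X] <;> ring

section ChainRule

variable {u u' : ℂ → ℂ} {v : ℂ → ℂ → ℂ} {u' vt vξ t ξ : ℂ}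

lemma eval_pderiv_of_eventually_eq {F G : MvPolynomial (Fin 2) ℂ}
    (hu : HasDerivAt u u' t) (hvt : HasDerivAt (v · ξ) vt t) (hvξ : HasDerivAt (v t) vξ ξ)
    (hFG : ∀ᶠ s in 𝓝 t, ∀ η, eval (coords (s, η)) G = eval (coords (u s, v s η)) F) :
    eval (coords (t, ξ)) (pderiv 0 G) = eval (coords (u t, v t ξ)) (pderiv 0 F) * u' +
        eval (coords (u t, v t ξ)) (pderiv 1 F) * vt ∧
      eval (coords (t, ξ)) (pderiv 1 G) = eval (coords (u t, v t ξ)) (pderiv 1 F) * vξ := by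
  constructor
  · have hG := hasDerivAt_eval_coords G (hasDerivAt_id t) (hasDerivAt_const t ξ)
    simp only [id, mul_one, mul_zero, add_zero] at hG
    refine hG.unique ((hasDerivAt_eval_coords F hu hvt).congr_of_eventuallyEq ?_)
    filter_upwards [hFG] with s hs using hs ξ
  · have hG := hasDerivAt_eval_coords G (hasDerivAt_const ξ t) (hasDerivAt_id ξ)
    have hF := hasDerivAt_eval_coords F (hasDerivAt_const ξ (u t)) hvξ
    simp only [id, mul_one, mul_zero, zero_add] at hG hF
    exact hG.unique (hF.congr_of_eventuallyEq (.of_forall hFG.self_of_nhds))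

lemma eval_Jac_of_eventually_eq {P Q R S : MvPolynomial (Fin 2) ℂ}
    (hu : HasDerivAt u u' t) (hvt : HasDerivAt (v · ξ) vt t) (hvξ : HasDerivAt (v t) vξ ξ)
    (hR : ∀ᶠ s in 𝓝 t, ∀ η, eval (coords (s, η)) R = eval (coords (u s, v s η)) P)
    (hS : ∀ᶠ s in 𝓝 t, ∀ η, eval (coords (s, η)) S = eval (coords (u s, v s η)) Q) :
    eval (coords (t, ξ)) (Jac R S) = eval (coords (u t, v t ξ)) (Jac P Q) * (u' * vξ) := by
  obtain ⟨hR0, hR1⟩ := eval_pderiv_of_eventually_eq hu hvt hvξ hR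
  obtain ⟨hS0, hS1⟩ := eval_pderiv_of_eventually_eq hu hvt hvξ hS
  rw [eval_Jac, eval_Jac, hR0, hR1, hS0, hS1]
  ring

end ChainRule

/-- The coordinates `(s, η) = (1 / x, y / x)` at infinity, as a map to the `(x, y)`-plane. -/
def chartAtInfinity (z : ℂ × ℂ) : ℂ × ℂ := (z.1⁻¹, z.1⁻¹ * z.2)

/-- In the coordinates `(t, ξ)` of the chart `τ` at infinity, the polynomial `F` becomes the
polynomial `G`, so that it extends to the exceptional line. -/
def PuiseuxChart.Extends (τ : PuiseuxChart ℂ) (F G : MvPolynomial (Fin 2) ℂ) : Prop :=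
  ∀ z : ℂ × ℂ, z.1 ≠ 0 → eval (coords z) G = eval (coords (chartAtInfinity (τ.toMap z))) F

lemma exists_eq_C_of_eval_inv_pow {p : Polynomial ℂ} {N : ℕ} (hN : 0 < N) {g : ℂ → ℂ}
    (hg : ContinuousAt g 0) (hp : ∀ t : ℂ, t ≠ 0 → p.eval (t ^ N)⁻¹ = g t) :
    ∃ a, p = Polynomial.C a := by
  refine ⟨_, Polynomial.eq_C_of_degree_le_zero (not_lt.1 fun hdeg => ?_)⟩
  have hpow : Tendsto (fun t : ℂ => t ^ N) (𝓝[≠] 0) (𝓝[≠] 0) := by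
    refine tendsto_nhdsWithin_of_tendsto_nhds_of_eventually_within _ ?_ ?_
    · refine tendsto_nhdsWithin_of_tendsto_nhds ?_
      simpa only [zero_pow hN.ne'] using (continuous_pow N).tendsto (0 : ℂ)
    · filter_upwards [self_mem_nhdsWithin] with t ht using pow_ne_zero N ht
  have hinf : Tendsto (fun t : ℂ => ‖p.eval (t ^ N)⁻¹‖) (𝓝[≠] 0) atTop :=
    p.tendsto_norm_atTop hdeg
      (tendsto_norm_cobounded_atTop.comp (tendsto_inv₀_nhdsNE_zero.comp hpow))
  refine not_tendsto_nhds_of_tendsto_atTop hinf ‖g 0‖ ?_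
  refine (hg.norm.tendsto.mono_left nhdsWithin_le_nhds).congr' ?_
  filter_upwards [self_mem_nhdsWithin] with t ht using by rw [hp t ht]

namespace PuiseuxChart

variable {τ : PuiseuxChart ℂ} {P Q R S : MvPolynomial (Fin 2) ℂ} {c : ℂ}

lemma Extends.eventually (h : τ.Extends P R) {t : ℂ} (ht : t ≠ 0) : ∀ᶠ s in 𝓝 t, ∀ η,
    eval (coords (s, η)) R = eval (coords ((s ^ τ.index)⁻¹,
      (s ^ τ.index)⁻¹ * (τ.center.eval s + s ^ τ.exponent * η))) P := by
  filter_upwards [isOpen_ne.mem_nhds ht] with s hs η using h (s, η) hs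

lemma Extends.X_pow_mul_Jac (hR : τ.Extends P R) (hS : τ.Extends Q S) (hJ : Jac P Q = C c) :
    X 0 ^ (2 * τ.index + 2) * Jac R S = C (-c * τ.index) * X 0 ^ (τ.exponent + 1) := by
  refine MvPolynomial.funext fun x => ?_
  obtain ⟨⟨t, ξ⟩, rfl⟩ : ∃ z, coords z = x := ⟨_, coords_apply_zero_one x⟩
  rcases eq_or_ne t 0 with rfl | ht
  · simp
  have hpow : t ^ τ.index ≠ 0 := pow_ne_zero _ ht
  have hu : HasDerivAt (fun s : ℂ => (s ^ τ.index)⁻¹) _ t := (hasDerivAt_pow τ.index t).inv hpow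
  have hvt : HasDerivAt (fun s : ℂ => (s ^ τ.index)⁻¹ *
      (τ.center.eval s + s ^ τ.exponent * ξ)) _ t :=
    hu.mul ((τ.center.hasDerivAt t).add ((hasDerivAt_pow τ.exponent t).mul_const ξ))
  have hvξ : HasDerivAt (fun η : ℂ => (t ^ τ.index)⁻¹ *
      (τ.center.eval t + t ^ τ.exponent * η)) _ ξ :=
    (((hasDerivAt_id ξ).const_mul (t ^ τ.exponent)).const_add (τ.center.eval t)).const_mul _
  have hJac := eval_Jac_of_eventually_eq hu hvt hvξ (hR.eventually ht) (hS.eventually ht)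
  rw [hJ, eval_C] at hJac
  obtain ⟨n, hn⟩ := Nat.exists_eq_succ_of_ne_zero τ.index_pos.ne'
  simp only [map_mul, map_pow, eval_X, eval_C, hJac, hn, coords_zero, Nat.succ_eq_add_one,
    Nat.add_sub_cancel, mul_one]
  field_simp
  ring

lemma Extends.exists_mem_support_ne_zero (h : τ.Extends P R) (hR : ∀ a, R ≠ C a) :
    ∃ m ∈ R.support, m 1 ≠ 0 := by
  by_contra! hm
  have hindep (t ξ : ℂ) : eval (coords (t, ξ)) R = eval (coords (t, 0)) R := by
    rw [eval_eq', eval_eq']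
    refine Finset.sum_congr rfl fun m hmR => ?_
    simp [hm m hmR]
  have hP (t : ℂ) (ht : t ≠ 0) : (aeval (coords (Polynomial.X, 0)) P).eval (t ^ τ.index)⁻¹ =
      eval (coords (t, 0)) R := by
    rw [eval_aeval_coords, ← hindep t (-τ.center.eval t / t ^ τ.exponent), h _ ht]
    simp [chartAtInfinity, toMap, mul_div_cancel₀ _ (pow_ne_zero _ ht)]
  have hcont : ContinuousAt (fun t : ℂ => eval (coords (t, 0)) R) 0 :=
    (hasDerivAt_eval_coords R (hasDerivAt_id 0) (hasDerivAt_const 0 0)).continuousAt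
  obtain ⟨a, ha⟩ := exists_eq_C_of_eval_inv_pow τ.index_pos hcont hP
  refine hR a (mul_left_cancel₀ (X_ne_zero (0 : Fin 2)) (MvPolynomial.funext fun x => ?_))
  obtain ⟨⟨t, ξ⟩, rfl⟩ : ∃ z, coords z = x := ⟨_, coords_apply_zero_one x⟩
  rcases eq_or_ne t 0 with rfl | ht
  · simp
  · rw [map_mul, map_mul, hindep, ← hP t ht, ha, Polynomial.eval_C, eval_C]

end PuiseuxChart

end Jacobian

section RestrictionToLine

open MvPolynomial Set

lemma coeff_aeval_coords_zero_X (F : MvPolynomial (Fin 2) ℂ) {m : Fin 2 →₀ ℕ} (hm : m 0 = 0) :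
    (aeval (coords (0, Polynomial.X)) F : Polynomial ℂ).coeff (m 1) = coeff m F := by
  induction F using MvPolynomial.induction_on' with
  | add F G hF hG => rw [map_add, Polynomial.coeff_add, hF, hG, coeff_add]
  | monomial n a =>
    have hnm : n = m ↔ n 0 = 0 ∧ n 1 = m 1 := by
      rw [Finsupp.ext_iff, Fin.forall_fin_two, hm]
    rw [aeval_monomial, Finsupp.prod_fintype _ _ (fun _ => pow_zero _), Fin.prod_univ_two,
      coords_zero, coords_one, coeff_monomial, Polynomial.algebraMap_eq, Polynomial.coeff_C_mul]
    rcases eq_or_ne (n 0) 0 with h0 | h0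
    · simp [h0, hnm, Polynomial.coeff_X_pow, eq_comm]
    · simp [h0, hnm]

lemma exists_aeval_coords_zero_X_eq_C_iff {F : MvPolynomial (Fin 2) ℂ} :
    (∃ a, (aeval (coords (0, Polynomial.X)) F : Polynomial ℂ) = Polynomial.C a) ↔
      ∀ m ∈ F.support, m 0 = 0 → m 1 = 0 := by
  constructor
  · rintro ⟨a, ha⟩ m hm h0
    by_contra h1
    rw [mem_support_iff, ← coeff_aeval_coords_zero_X F h0, ha] at hm
    exact hm (Polynomial.coeff_C_of_ne_zero h1)
  · refine fun h => ⟨_, Polynomial.eq_C_of_natDegree_le_zero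
      (Polynomial.natDegree_le_iff_coeff_eq_zero.2 fun n hn => ?_)⟩
    have hcoeff := coeff_aeval_coords_zero_X F (m := Finsupp.single 1 n) (by simp)
    rw [Finsupp.single_eq_same] at hcoeff
    rw [hcoeff]
    by_contra hne
    have h1 := h _ (mem_support_iff.2 hne) (by simp)
    rw [Finsupp.single_eq_same] at h1
    exact hn.ne' h1

namespace PuiseuxChart

variable {τ : PuiseuxChart ℂ} {P Q R S : MvPolynomial (Fin 2) ℂ} {c r : ℂ}

lemma Extends.apply_one_eq_zero_of_mem_support_Jac (hR : τ.Extends P R) (hS : τ.Extends Q S)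
    (hJ : Jac P Q = C c) {p : Fin 2 →₀ ℕ} (hp : p ∈ (Jac R S).support) : p 1 = 0 := by
  by_contra h1
  have h := congrArg (coeff (Finsupp.single 0 (2 * τ.index + 2) + p)) (hR.X_pow_mul_Jac hS hJ)
  rw [X_pow_eq_monomial, coeff_monomial_mul, one_mul, X_pow_eq_monomial, C_mul_monomial,
    coeff_monomial, if_neg] at h
  · exact mem_support_iff.1 hp h
  · intro heq
    have := DFunLike.congr_fun heq 1
    simp at this
    exact h1 this.symm

lemma Extends.ne_C (hR : τ.Extends P R) (hS : τ.Extends Q S) (hJ : Jac P Q = C c) (hc : c ≠ 0)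
    (a : ℂ) : R ≠ C a := by
  rintro rfl
  have h := hR.X_pow_mul_Jac hS hJ
  rw [Jac, pderiv_C, pderiv_C, zero_mul, zero_mul, sub_zero, mul_zero] at h
  exact mul_ne_zero (C_ne_zero.2 (mul_ne_zero (neg_ne_zero.2 hc)
    (Nat.cast_ne_zero.2 τ.index_pos.ne'))) (pow_ne_zero _ (X_ne_zero _)) h.symm

lemma Extends.exists_aeval_coords_zero_X_eq_C (hR : τ.Extends P R) (hS : τ.Extends Q S)
    (hJ : Jac P Q = C c) (hc : c ≠ 0)
    (h : ∃ a, (aeval (coords (0, Polynomial.X)) R : Polynomial ℂ) = Polynomial.C a) :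
    ∃ a, (aeval (coords (0, Polynomial.X)) S : Polynomial ℂ) = Polynomial.C a := by
  rw [exists_aeval_coords_zero_X_eq_C_iff] at h ⊢
  by_contra! hS0
  obtain ⟨p, hp, h1⟩ := exists_mem_support_Jac h
    (hR.exists_mem_support_ne_zero (hR.ne_C hS hJ hc)) hS0
  exact h1 (hR.apply_one_eq_zero_of_mem_support_Jac hS hJ hp)

lemma Extends.finite_setOf_polyMap_eq (hR : τ.Extends P R) (hS : τ.Extends Q S)
    (hJ : Jac P Q = C c) (hc : c ≠ 0) (r : ℂ) :
    {b | ∃ x, polyMap R S (0, x) = (r, b)}.Finite := by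
  have hres (F : MvPolynomial (Fin 2) ℂ) (x : ℂ) : eval (coords (0, x)) F =
      (aeval (coords (0, Polynomial.X)) F : Polynomial ℂ).eval x := by
    rw [eval_aeval_coords, Polynomial.eval_zero, Polynomial.eval_X]
  by_cases hRS : (aeval (coords (0, Polynomial.X)) R : Polynomial ℂ) = Polynomial.C r
  · obtain ⟨a, ha⟩ := hR.exists_aeval_coords_zero_X_eq_C hS hJ hc ⟨r, hRS⟩
    refine (finite_singleton a).subset ?_
    rintro b ⟨x, hx⟩
    have hb : eval (coords (0, x)) S = b := congrArg Prod.snd hx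
    rw [← hb, hres, ha, Polynomial.eval_C, mem_singleton_iff]
  · refine ((Polynomial.finite_setOfPred_isRoot (sub_ne_zero.2 hRS)).image
      fun x => eval (coords (0, x)) S).subset ?_
    rintro b ⟨x, hx⟩
    have hr : eval (coords (0, x)) R = r := congrArg Prod.fst hx
    refine ⟨x, ?_, congrArg Prod.snd hx⟩
    rw [mem_ofPred_eq, Polynomial.IsRoot, Polynomial.eval_sub, ← hres, hr, Polynomial.eval_C,
      sub_self]

end PuiseuxChart

end RestrictionToLine

section NonProperSet

open MvPolynomial Filter Topology Polynomial.Bivariate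

lemma evalEval_eq_eval_equivMvPolynomial (G : Polynomial (Polynomial ℂ)) (z : ℂ × ℂ) :
    G.evalEval z.1 z.2 = eval (coords z) (equivMvPolynomial ℂ G) := by
  have h : Polynomial.evalEvalRingHom z.1 z.2 =
      (eval (coords z)).comp (equivMvPolynomial ℂ : _ →+* MvPolynomial (Fin 2) ℂ) := by
    ext <;> simp
  exact RingHom.congr_fun h G

lemma exists_evalEval_eq_pow_mul_eval (F : MvPolynomial (Fin 2) ℂ) :
    ∃ (a : ℕ) (G : Polynomial (Polynomial ℂ)), ∀ z : ℂ × ℂ, z.1 ≠ 0 →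
      G.evalEval z.1 z.2 = z.1 ^ a * eval (coords (chartAtInfinity z)) F := by
  induction F using MvPolynomial.induction_on with
  | C a => exact ⟨0, .C (.C a), fun z _ => by simp⟩
  | add F F' hF hF' =>
    obtain ⟨a, G, hG⟩ := hF
    obtain ⟨b, G', hG'⟩ := hF'
    refine ⟨a + b, .C (.X ^ b) * G + .C (.X ^ a) * G', fun z hz => ?_⟩
    simp only [Polynomial.evalEval_add, Polynomial.evalEval_mul, Polynomial.evalEval_C,
      Polynomial.eval_pow, Polynomial.eval_X, hG z hz, hG' z hz, map_add]
    ring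
  | mul_X F i hF =>
    obtain ⟨a, G, hG⟩ := hF
    fin_cases i
    · refine ⟨a + 1, G, fun z hz => ?_⟩
      rw [hG z hz, map_mul, eval_X]
      simp only [chartAtInfinity, Fin.zero_eta, coords_zero]
      rw [pow_succ]
      field_simp
    · refine ⟨a + 1, G * .X, fun z hz => ?_⟩
      rw [Polynomial.evalEval_mul, Polynomial.evalEval_X, hG z hz, map_mul, eval_X]
      simp only [chartAtInfinity, Fin.mk_one, coords_one]
      rw [pow_succ]
      field_simp

lemma continuous_polyMap (P Q : MvPolynomial (Fin 2) ℂ) : Continuous (polyMap P Q) := by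
  have hcoords : Continuous (coords : ℂ × ℂ → Fin 2 → ℂ) :=
    continuous_pi (Fin.forall_fin_two.2 ⟨continuous_fst, continuous_snd⟩)
  exact ((continuous_eval P).comp hcoords).prodMk ((continuous_eval Q).comp hcoords)

namespace PuiseuxChart

variable {F P Q R S : MvPolynomial (Fin 2) ℂ}

lemma Extends.comp {σ : PuiseuxChart ℂ} (h : σ.Extends F R) (τ : PuiseuxChart ℂ) :
    ∃ R', (σ.comp τ).Extends F R' := by
  refine ⟨equivMvPolynomial ℂ (τ.pullback ((equivMvPolynomial ℂ).symm R)), fun z hz => ?_⟩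
  rw [← evalEval_eq_eval_equivMvPolynomial, evalEval_pullback, toMap_comp, Function.comp_apply,
    ← h (τ.toMap z) (pow_ne_zero _ hz), ← Prod.mk.eta (p := τ.toMap z),
    evalEval_eq_eval_equivMvPolynomial, AlgEquiv.apply_symm_apply]

lemma Lifts.comp {σ τ : PuiseuxChart ℂ} {𝒱 : Ultrafilter (ℂ × ℂ)} {S : Set ℂ}
    (h : τ.Lifts 𝒱 S) : (σ.comp τ).Lifts (𝒱.map σ.toMap) S := by
  obtain ⟨𝒲, x, hx, h𝒲, rfl⟩ := h
  exact ⟨𝒲, x, hx, h𝒲, by rw [Ultrafilter.map_map, toMap_comp]⟩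

lemma exists_finite_comp_extends (σ : PuiseuxChart ℂ) (F : MvPolynomial (Fin 2) ℂ) :
    ∃ T : Set (PuiseuxChart ℂ), T.Finite ∧ (∀ τ ∈ T, ∃ R, (σ.comp τ).Extends F R) ∧
      ∀ (𝒱 : Ultrafilter (ℂ × ℂ)) (x L : ℂ), ↑𝒱 ≤ nhdsOffLine x →
        Tendsto (fun z => eval (coords (chartAtInfinity (σ.toMap z))) F) 𝒱 (𝓝 L) →
        ∃ τ ∈ T, τ.Lifts 𝒱 Set.univ := by
  obtain ⟨a, G, hG⟩ := exists_evalEval_eq_pow_mul_eval F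
  have hσ (z : ℂ × ℂ) (hz : z.1 ≠ 0) : (σ.pullback G).evalEval z.1 z.2 =
      z.1 ^ (σ.index * a) * eval (coords (chartAtInfinity (σ.toMap z))) F := by
    rw [evalEval_pullback, hG _ (pow_ne_zero _ hz), toMap, pow_mul]
  obtain ⟨T, hT⟩ := exists_isResolution (σ.index * a) (σ.pullback G)
  refine ⟨T, hT.finite, fun τ hτ => ?_, fun 𝒱 x L h𝒱 hL => ?_⟩
  · obtain ⟨R, hR⟩ := hT.dvd τ hτ
    refine ⟨equivMvPolynomial ℂ R, fun z hz => ?_⟩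
    have hτz : (τ.toMap z).1 ≠ 0 := pow_ne_zero _ hz
    have h := hσ _ hτz
    rw [← evalEval_pullback, hR, Polynomial.evalEval_mul, Polynomial.evalEval_C,
      Polynomial.eval_pow, Polynomial.eval_X, evalEval_eq_eval_equivMvPolynomial, pow_mul] at h
    rw [toMap_comp]
    exact mul_left_cancel₀ (pow_ne_zero _ hτz) h
  · refine hT.lifts 𝒱 x trivial h𝒱 L (hL.congr' ?_)
    filter_upwards [(le_nhdsOffLine.1 h𝒱).2.1] with z hz
    rw [hσ z hz, mul_div_cancel_left₀ _ (pow_ne_zero _ hz)]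

lemma exists_finite_extends (P Q : MvPolynomial (Fin 2) ℂ) :
    ∃ T : Set (PuiseuxChart ℂ), T.Finite ∧
      (∀ τ ∈ T, ∃ R S, τ.Extends P R ∧ τ.Extends Q S) ∧
      ∀ (𝒱 : Ultrafilter (ℂ × ℂ)) (x : ℂ) (b : ℂ × ℂ), ↑𝒱 ≤ nhdsOffLine x →
        Tendsto (polyMap P Q ∘ chartAtInfinity) 𝒱 (𝓝 b) → ∃ τ ∈ T, τ.Lifts 𝒱 Set.univ := by
  obtain ⟨T, hT, hTP, hTlift⟩ := exists_finite_comp_extends (refl ℂ) P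
  choose U hU hUQ hUlift using fun σ : PuiseuxChart ℂ => exists_finite_comp_extends σ Q
  refine ⟨⋃ σ ∈ T, σ.comp '' U σ, hT.biUnion fun σ _ => (hU σ).image _, fun τ hmem => ?_,
    fun 𝒱 x b h𝒱 hb => ?_⟩
  · obtain ⟨σ, hσ, τ, hτ, rfl⟩ := Set.mem_iUnion₂.1 hmem
    obtain ⟨R, hR⟩ := hTP σ hσ
    have hRσ : σ.Extends P R := by
      simpa only [Extends, toMap_comp, toMap_refl, Function.id_comp] using hR
    obtain ⟨R', hR'⟩ := hRσ.comp τ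
    obtain ⟨S, hS⟩ := hUQ σ τ hτ
    exact ⟨R', S, hR', hS⟩
  · have hP : Tendsto (fun z => eval (coords (chartAtInfinity z)) P) 𝒱 (𝓝 b.1) :=
      (continuous_fst.tendsto b).comp hb
    have hQ : Tendsto (fun z => eval (coords (chartAtInfinity z)) Q) 𝒱 (𝓝 b.2) :=
      (continuous_snd.tendsto b).comp hb
    obtain ⟨σ, hσ, 𝒲, y, -, h𝒲, rfl⟩ := hTlift 𝒱 x b.1 h𝒱 (by rwa [toMap_refl])
    obtain ⟨τ, hτ, h⟩ := hUlift σ 𝒲 y b.2 h𝒲 (tendsto_map'_iff.1 hQ)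
    exact ⟨_, Set.mem_biUnion hσ ⟨τ, hτ, rfl⟩, h.comp⟩

lemma Extends.exists_polyMap_eq {τ : PuiseuxChart ℂ} (hR : τ.Extends P R) (hS : τ.Extends Q S)
    {𝒱 : Ultrafilter (ℂ × ℂ)} (h𝒱 : τ.Lifts 𝒱 Set.univ) {b : ℂ × ℂ}
    (hb : Tendsto (polyMap P Q ∘ chartAtInfinity) 𝒱 (𝓝 b)) : ∃ x, polyMap R S (0, x) = b := by
  obtain ⟨𝒲, x, -, h𝒲, rfl⟩ := h𝒱
  refine ⟨x, tendsto_nhds_unique ?_ (tendsto_map'_iff.1 hb)⟩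
  have hRS := (continuous_polyMap R S).tendsto (0, x)
  refine (hRS.mono_left (h𝒲.trans nhdsWithin_le_nhds)).congr' ?_
  filter_upwards [(le_nhdsOffLine.1 h𝒲).2.1] with z hz
  exact Prod.ext (hR z hz) (hS z hz)

end PuiseuxChart

/-- The limits of `(P, Q)` along paths that tend to a point of the line at infinity other than the
point in the direction of the second axis. -/
def limitsAtInfinity (P Q : MvPolynomial (Fin 2) ℂ) : Set (ℂ × ℂ) :=
  {b | ∃ 𝒱 : Ultrafilter (ℂ × ℂ), (∃ x, ↑𝒱 ≤ nhdsOffLine x) ∧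
    Tendsto (polyMap P Q ∘ chartAtInfinity) 𝒱 (𝓝 b)}

lemma finite_setOf_mem_limitsAtInfinity {P Q : MvPolynomial (Fin 2) ℂ} {c : ℂ}
    (hJ : Jac P Q = C c) (hc : c ≠ 0) (r : ℂ) : {b | (r, b) ∈ limitsAtInfinity P Q}.Finite := by
  obtain ⟨T, hT, hext, hlift⟩ := PuiseuxChart.exists_finite_extends P Q
  choose! R S hR hS using hext
  refine (hT.biUnion fun τ hτ =>
    (hR τ hτ).finite_setOf_polyMap_eq (hS τ hτ) hJ hc r).subset ?_
  rintro b ⟨𝒱, ⟨x, h𝒱⟩, hb⟩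
  obtain ⟨τ, hτ, h⟩ := hlift 𝒱 x _ h𝒱 hb
  exact Set.mem_biUnion hτ ((hR τ hτ).exists_polyMap_eq (hS τ hτ) h hb)

lemma chartAtInfinity_chartAtInfinity {z : ℂ × ℂ} (hz : z.1 ≠ 0) :
    chartAtInfinity (chartAtInfinity z) = z := by
  simp only [chartAtInfinity, inv_inv, mul_inv_cancel_left₀ hz]

lemma mem_limitsAtInfinity {P Q : MvPolynomial (Fin 2) ℂ} {𝒱 : Ultrafilter (ℂ × ℂ)} {b : ℂ × ℂ}
    (h𝒱 : Tendsto (‖·‖) (𝒱 : Filter (ℂ × ℂ)) atTop) (hle : ∀ᶠ z : ℂ × ℂ in 𝒱, ‖z.2‖ ≤ ‖z.1‖)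
    (hb : Tendsto (polyMap P Q) 𝒱 (𝓝 b)) : b ∈ limitsAtInfinity P Q := by
  have hfst : Tendsto (fun z : ℂ × ℂ => ‖z.1‖) 𝒱 atTop := by
    refine h𝒱.congr' ?_
    filter_upwards [hle] with z hz using by rw [Prod.norm_def, max_eq_left hz]
  have hne : ∀ᶠ z : ℂ × ℂ in 𝒱, z.1 ≠ 0 := by
    filter_upwards [hfst.eventually_gt_atTop 0] with z hz using norm_pos_iff.1 hz
  have hslope : ∀ᶠ z : ℂ × ℂ in 𝒱, (chartAtInfinity z).2 ∈ Metric.closedBall (0 : ℂ) 1 := by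
    filter_upwards [hle, hne] with z hz h0
    rw [mem_closedBall_zero_iff, chartAtInfinity, norm_mul, norm_inv, inv_mul_le_one₀]
    exacts [hz, norm_pos_iff.2 h0]
  obtain ⟨x, -, hx⟩ := (isCompact_closedBall (0 : ℂ) 1).ultrafilter_le_nhds'
    (𝒱.map fun z => (chartAtInfinity z).2) hslope
  refine ⟨𝒱.map chartAtInfinity, ⟨x, le_nhdsOffLine.2 ⟨tendsto_map'_iff.2 ?_, ?_, hx⟩⟩, ?_⟩
  · exact tendsto_inv₀_cobounded.comp (tendsto_norm_atTop_iff_cobounded.1 hfst)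
  · exact hne.mono fun z hz => inv_ne_zero hz
  · refine tendsto_map'_iff.2 (hb.congr' ?_)
    filter_upwards [hne] with z hz
    rw [Function.comp_apply, Function.comp_apply, chartAtInfinity_chartAtInfinity hz]

lemma polyMap_rename_swap (P Q : MvPolynomial (Fin 2) ℂ) :
    polyMap (rename (Equiv.swap 0 1) P) (rename (Equiv.swap 0 1) Q) = polyMap P Q ∘ Prod.swap := by
  have hswap (z : ℂ × ℂ) : coords z ∘ Equiv.swap 0 1 = coords z.swap := by
    ext i
    fin_cases i <;> rfl
  funext z
  change (eval (coords z) _, eval (coords z) _) = _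
  rw [eval_rename, eval_rename, hswap]
  rfl

lemma Jac_rename_swap (P Q : MvPolynomial (Fin 2) ℂ) :
    Jac (rename (Equiv.swap 0 1) P) (rename (Equiv.swap 0 1) Q) =
      -rename (Equiv.swap 0 1) (Jac P Q) := by
  have h0 (F : MvPolynomial (Fin 2) ℂ) := pderiv_rename (Equiv.swap (0 : Fin 2) 1).injective 1 F
  have h1 (F : MvPolynomial (Fin 2) ℂ) := pderiv_rename (Equiv.swap (0 : Fin 2) 1).injective 0 F
  simp only [Equiv.swap_apply_left, Equiv.swap_apply_right] at h0 h1
  simp only [Jac, h0, h1, map_sub, map_mul]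
  ring

lemma nonProperSet_subset (P Q : MvPolynomial (Fin 2) ℂ) : nonProperSet P Q ⊆
    limitsAtInfinity P Q ∪
      limitsAtInfinity (rename (Equiv.swap 0 1) P) (rename (Equiv.swap 0 1) Q) := by
  rintro b ⟨z, hz, hb⟩
  have hnorm : Tendsto (‖·‖) ((hyperfilter ℕ).map z : Filter (ℂ × ℂ)) atTop :=
    tendsto_map'_iff.2 (hz.mono_left Nat.hyperfilter_le_atTop)
  have hlim : Tendsto (polyMap P Q) ((hyperfilter ℕ).map z) (𝓝 b) :=
    tendsto_map'_iff.2 (hb.mono_left Nat.hyperfilter_le_atTop)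
  rcases ((hyperfilter ℕ).map z).em fun w : ℂ × ℂ => ‖w.2‖ ≤ ‖w.1‖ with hle | hle
  · exact .inl (mem_limitsAtInfinity hnorm hle hlim)
  · refine .inr (mem_limitsAtInfinity (𝒱 := ((hyperfilter ℕ).map z).map Prod.swap) ?_ ?_ ?_)
    · exact tendsto_map'_iff.2 (hnorm.congr fun w => max_comm _ _)
    · exact hle.mono fun w hw => (not_le.1 hw).le
    · rw [polyMap_rename_swap]
      exact tendsto_map'_iff.2 hlim

theorem finite_setOf_mem_nonProperSet {P Q : MvPolynomial (Fin 2) ℂ} {c : ℂ}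
    (hJ : Jac P Q = C c) (hc : c ≠ 0) (r : ℂ) : {b | (r, b) ∈ nonProperSet P Q}.Finite := by
  have hJ' := Jac_rename_swap P Q
  rw [hJ, rename_C, ← C_neg] at hJ'
  exact ((finite_setOf_mem_limitsAtInfinity hJ hc r).union
    (finite_setOf_mem_limitsAtInfinity hJ' (neg_ne_zero.2 hc) r)).subset
    fun _ hb => nonProperSet_subset P Q hb

end NonProperSet

section ElementaryAutomorphism

open Polynomial Filter Topology

lemma eval_aeval (P : MvPolynomial (Fin 2) ℂ) (f : ℂ[X]) (x : Fin 2 → ℂ) :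
    MvPolynomial.eval x (aeval P f) = f.eval (MvPolynomial.eval x P) := by
  simpa only [MvPolynomial.aeval_eq_eval, coe_aeval_eq_eval] using
    (aeval_algHom_apply (MvPolynomial.aeval x) P f).symm

lemma Jac_sub_aeval (P Q : MvPolynomial (Fin 2) ℂ) (f : ℂ[X]) :
    Jac (Q - aeval P f) P = -Jac P Q := by
  simp only [Jac, map_sub, Derivation.map_aeval, smul_eq_mul]
  ring

lemma mem_nonProperSet_sub_aeval {P Q : MvPolynomial (Fin 2) ℂ} {b : ℂ × ℂ}
    (hb : b ∈ nonProperSet P Q) (f : ℂ[X]) :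
    (b.2 - f.eval b.1, b.1) ∈ nonProperSet (Q - aeval P f) P := by
  obtain ⟨z, hz, hlim⟩ := hb
  have hcont : Continuous fun w : ℂ × ℂ => (w.2 - f.eval w.1, w.1) := by fun_prop
  refine ⟨z, hz, ((hcont.tendsto b).comp hlim).congr fun j => ?_⟩
  simp only [Function.comp_apply, polyMap, map_sub, eval_aeval]

lemma adjoin_le_adjoin_sub_comp (γ φ f : ℂ[X]) :
    Algebra.adjoin ℂ {γ, φ} ≤ Algebra.adjoin ℂ {φ - f.comp γ, γ} := by
  have hγ : γ ∈ Algebra.adjoin ℂ {φ - f.comp γ, γ} := Algebra.subset_adjoin (.inr rfl)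
  have hf : f.comp γ ∈ Algebra.adjoin ℂ {φ - f.comp γ, γ} :=
    Algebra.adjoin_mono (Set.subset_insert _ _) (aeval_mem_adjoin_singleton ℂ γ)
  have hφ := add_mem (Algebra.subset_adjoin (R := ℂ) (.inl rfl)) hf
  rw [sub_add_cancel] at hφ
  exact Algebra.adjoin_le (Set.pair_subset hγ hφ)

lemma natDegree_ne_zero_of_X_mem_adjoin {γ : ℂ[X]} {r : ℂ}
    (hX : X ∈ Algebra.adjoin ℂ {C r, γ}) : γ.natDegree ≠ 0 := by
  intro h
  rw [eq_C_of_natDegree_eq_zero h, ← algebraMap_eq, Algebra.adjoin_insert_algebraMap,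
    Algebra.adjoin_singleton_algebraMap, Algebra.mem_bot] at hX
  obtain ⟨a, ha⟩ := hX
  exact X_ne_C a ha.symm

theorem not_range_curveMap_subset_nonProperSet {P Q : MvPolynomial (Fin 2) ℂ} {c : ℂ}
    (hJ : Jac P Q = .C c) (hc : c ≠ 0) {γ φ : ℂ[X]} (hX : X ∈ Algebra.adjoin ℂ {γ, φ}) :
    ¬ Set.range (curveMap γ φ) ⊆ nonProperSet P Q := by
  induction hn : γ.natDegree using Nat.strong_induction_on generalizing P Q c γ φ with
  | _ n ih =>
    subst hn
    intro hsub
    by_cases hγ : γ.natDegree = 0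
    · obtain ⟨r, rfl⟩ := natDegree_eq_zero.1 hγ
      refine Set.infinite_univ ((finite_setOf_mem_nonProperSet hJ hc r).subset fun b _ => ?_)
      obtain ⟨s, rfl⟩ := IsAlgClosed.eval_surjective (natDegree_ne_zero_of_X_mem_adjoin hX) b
      exact hsub ⟨s, by rw [curveMap, eval_C]⟩
    · obtain ⟨f, hf⟩ := exists_natDegree_sub_comp_lt hγ hX
      refine ih _ hf (P := Q - aeval P f) (Q := P) (c := -c) ?_ (neg_ne_zero.2 hc)
        (adjoin_le_adjoin_sub_comp γ φ f hX) rfl ?_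
      · rw [Jac_sub_aeval, hJ, MvPolynomial.C_neg]
      · rintro _ ⟨s, rfl⟩
        simpa only [curveMap, eval_sub, eval_comp] using
          mem_nonProperSet_sub_aeval (hsub ⟨s, rfl⟩) f

end ElementaryAutomorphism

lemma exists_eq_C_of_forall_eval_ne_zero {σ k : Type*} [Finite σ] [Field k] [IsAlgClosed k]
    {F : MvPolynomial σ k} (hF : ∀ x, MvPolynomial.eval x F ≠ 0) :
    ∃ c ≠ 0, F = MvPolynomial.C c := by
  have hlocus : MvPolynomial.zeroLocus k (Ideal.span {F}) = ∅ := by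
    refine Set.eq_empty_of_forall_notMem fun x hx => hF x ?_
    rw [← MvPolynomial.aeval_eq_eval]
    exact hx F (Ideal.mem_span_singleton_self F)
  have hunit : IsUnit F := by
    rw [← Ideal.span_singleton_eq_top, ← Ideal.radical_eq_top,
      ← MvPolynomial.vanishingIdeal_zeroLocus_eq_radical (K := k), hlocus,
      MvPolynomial.vanishingIdeal_empty]
  obtain ⟨c, hc, rfl⟩ := MvPolynomial.isUnit_iff_eq_C_of_isReduced.1 hunit
  exact ⟨c, hc.ne_zero, rfl⟩

lemma X_mem_adjoin_of_retraction {γ₁ γ₂ : Polynomial ℂ} {δ : MvPolynomial (Fin 2) ℂ}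
    (hδ : ∀ s, MvPolynomial.eval (coords (γ₁.eval s, γ₂.eval s)) δ = s) :
    Polynomial.X ∈ Algebra.adjoin ℂ {γ₁, γ₂} := by
  have hX : MvPolynomial.aeval (coords (γ₁, γ₂)) δ = Polynomial.X :=
    Polynomial.funext fun s => by rw [eval_aeval_coords, hδ, Polynomial.eval_X]
  have hmem := (MvPolynomial.aeval (R := ℂ) (coords (γ₁, γ₂))).mem_range_self δ
  rw [hX, MvPolynomial.aeval_range] at hmem
  refine Algebra.adjoin_mono (Set.range_subset_iff.2 ?_) hmem
  exact Fin.forall_fin_two.2 ⟨.inl rfl, .inr rfl⟩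

theorem stmt5_general (P Q : MvPolynomial (Fin 2) ℂ) (γ₁ γ₂ : Polynomial ℂ)
    (δ : MvPolynomial (Fin 2) ℂ)
    (hretr : ∀ s : ℂ,
      MvPolynomial.eval (fun i : Fin 2 => if i = 0 then γ₁.eval s else γ₂.eval s) δ = s)
    (hsub : Set.range (curveMap γ₁ γ₂) ⊆ nonProperSet P Q) :
    ∃ z : ℂ × ℂ,
      MvPolynomial.eval (fun i : Fin 2 => if i = 0 then z.1 else z.2) (Jac P Q) = 0 := by
  by_contra! hJ
  obtain ⟨c, hc, hJc⟩ := exists_eq_C_of_forall_eval_ne_zero (F := Jac P Q) fun x => by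
    rw [← coords_apply_zero_one x]
    exact hJ (x 0, x 1)
  exact not_range_curveMap_subset_nonProperSet hJc hc (X_mem_adjoin_of_retraction hretr) hsub

/-- If the non-proper value set `A_f` of a non-constant polynomial map
`f = (P,Q)` of `ℂ²` has a component isomorphic to the line — i.e. there are a polynomial
curve `γ : ℂ → ℂ²` admitting a polynomial retraction `δ` with `δ ∘ γ = id`, whose image
`L = γ(ℂ)` is contained in `A_f`, such that any nonconstant polynomial curve inside `A_f`
either lies in `L` or meets `L` in finitely many points — then `f` has a singular point:
`J(P,Q)(z) = 0` for some `z ∈ ℂ²`. -/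
theorem stmt5 (P Q : MvPolynomial (Fin 2) ℂ)
    (hnonconst : ¬ (P.totalDegree = 0 ∧ Q.totalDegree = 0))
    (L : Set (ℂ × ℂ)) (γ₁ γ₂ : Polynomial ℂ) (δ : MvPolynomial (Fin 2) ℂ)
    (hretr : ∀ s : ℂ,
      MvPolynomial.eval (fun i : Fin 2 => if i = 0 then γ₁.eval s else γ₂.eval s) δ = s)
    (hL : L = Set.range (curveMap γ₁ γ₂))
    (hLsub : L ⊆ nonProperSet P Q)
    (hcomp : ∀ η₁ η₂ : Polynomial ℂ, ¬ (η₁.natDegree = 0 ∧ η₂.natDegree = 0) →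
      Set.range (curveMap η₁ η₂) ⊆ nonProperSet P Q →
      Set.range (curveMap η₁ η₂) ⊆ L ∨ (Set.range (curveMap η₁ η₂) ∩ L).Finite) :
    ∃ z : ℂ × ℂ,
      MvPolynomial.eval (fun i : Fin 2 => if i = 0 then z.1 else z.2) (Jac P Q) = 0 := by
  exact stmt5_general P Q γ₁ γ₂ δ hretr (hL ▸ hLsub)

end
end

section
/- Let a and b be positive integers and let p, q ∈ ℂ[ξ] be nonzero polynomials satisfying a·p·q′ = b·p′·q. Then there exists C ∈ ℂ∖{0} such that p^b = C·q^a. Moreover, if deg p > 0, then p and q have a common zero in ℂ. -/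
/-!
The hypothesis says `b p'/p = a q'/q`: the logarithmic derivatives of `p ^ b` and `q ^ a` agree,
so the Wronskian of these two powers vanishes. Dividing two polynomials by their gcd changes the
Wronskian only by a square factor, and for coprime polynomials it vanishes only if both
derivatives do, that is, in characteristic zero, if both are constant. Finally `p ∣ p ^ b` and
`p ^ b = C q ^ a` give `p ∣ q ^ a`, so every zero of `p` is a zero of `q`.
-/

section

open Polynomial

section Wronskian

variable {R : Type*} [CommRing R]

theorem wronskian_mul_mul_left (g p q : R[X]) :
    wronskian (g * p) (g * q) = g ^ 2 * wronskian p q := by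
  simp only [wronskian, derivative_mul]
  ring

theorem derivative_pow_mul_self (p : R[X]) (n : ℕ) :
    derivative (p ^ n) * p = C (n : R) * p ^ n * derivative p := by
  cases n with
  | zero => simp
  | succ n =>
    rw [derivative_pow, Nat.add_sub_cancel]
    ring

theorem wronskian_pow_pow_mul_mul (p q : R[X]) (m n : ℕ) :
    wronskian (p ^ m) (q ^ n) * (p * q) =
      p ^ m * q ^ n * (C (n : R) * (p * derivative q) - C (m : R) * (derivative p * q)) := by
  rw [wronskian]
  linear_combination
    p ^ m * p * derivative_pow_mul_self q n - q ^ n * q * derivative_pow_mul_self p m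

end Wronskian

section Field

variable {K : Type*} [Field K] [CharZero K] {p q : K[X]}

theorem exists_eq_C_mul_of_wronskian_eq_zero (hq : q ≠ 0) (h : wronskian p q = 0) :
    ∃ c : K, p = C c * q := by
  classical
  obtain ⟨u, v, hu, hv, huv⟩ := extract_gcd p q
  set g := gcd p q
  have hg : g ≠ 0 := left_ne_zero_of_mul (hv ▸ hq)
  have hw : wronskian u v = 0 := by
    rw [hu, hv, wronskian_mul_mul_left] at h
    exact (mul_eq_zero.mp h).resolve_left (pow_ne_zero 2 hg)
  obtain ⟨hu', hv'⟩ := ((gcd_isUnit_iff u v).mp huv).wronskian_eq_zero_iff.mp hw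
  obtain ⟨r, rfl⟩ : ∃ r, u = C r := ⟨_, eq_C_of_derivative_eq_zero hu'⟩
  obtain ⟨s, rfl⟩ : ∃ s, v = C s := ⟨_, eq_C_of_derivative_eq_zero hv'⟩
  have hs : s ≠ 0 := C_ne_zero.mp (right_ne_zero_of_mul (hv ▸ hq))
  refine ⟨r / s, ?_⟩
  calc
    p = g * C (r / s * s) := by rw [div_mul_cancel₀ r hs, ← hu]
    _ = C (r / s) * (g * C s) := by rw [C_mul, mul_left_comm]
    _ = C (r / s) * q := by rw [← hv]

theorem exists_pow_eq_C_mul_pow {a b : ℕ} (hp : p ≠ 0) (hq : q ≠ 0)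
    (h : C (a : K) * (p * derivative q) = C (b : K) * (derivative p * q)) :
    ∃ c : K, c ≠ 0 ∧ p ^ b = C c * q ^ a := by
  have hw : wronskian (p ^ b) (q ^ a) = 0 := by
    refine (mul_eq_zero.mp ?_).resolve_right (mul_ne_zero hp hq)
    rw [wronskian_pow_pow_mul_mul, h, sub_self, mul_zero]
  obtain ⟨c, hc⟩ := exists_eq_C_mul_of_wronskian_eq_zero (pow_ne_zero a hq) hw
  exact ⟨c, C_ne_zero.mp (left_ne_zero_of_mul (hc ▸ pow_ne_zero b hp)), hc⟩

theorem stmt10_general (L : Type*) [Field L] [IsAlgClosed L] [Algebra K L] {a b : ℕ} (hb : 0 < b)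
    (hp : p ≠ 0) (hq : q ≠ 0)
    (h : C (a : K) * (p * derivative q) = C (b : K) * (derivative p * q)) :
    (∃ c : K, c ≠ 0 ∧ p ^ b = C c * q ^ a) ∧
      (0 < p.natDegree → ∃ z : L, aeval z p = 0 ∧ aeval z q = 0) := by
  obtain ⟨c, hc, hpq⟩ := exists_pow_eq_C_mul_pow hp hq h
  refine ⟨⟨c, hc, hpq⟩, fun hdeg ↦ ?_⟩
  have hdvd : p ∣ q ^ a := (dvd_C_mul hc).mp (hpq ▸ dvd_pow_self p hb.ne')
  obtain ⟨z, hz⟩ := IsAlgClosed.exists_aeval_eq_zero L p (natDegree_pos_iff_degree_pos.mp hdeg).ne'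
  have hza : aeval z q ^ a = 0 := by
    rw [← map_pow]
    exact aeval_eq_zero_of_dvd_aeval_eq_zero hdvd hz
  exact ⟨z, hz, eq_zero_of_pow_eq_zero hza⟩

end Field

end

/-- If `a, b` are positive integers and `p, q ∈ ℂ[ξ]` are nonzero
polynomials with `a p q' = b p' q`, then `p^b = C q^a` for some `C ∈ ℂ*`; moreover if
`deg p > 0` then `p` and `q` have a common zero. -/
theorem stmt10 (a b : ℕ) (ha : 0 < a) (hb : 0 < b)
    (p q : Polynomial ℂ) (hp : p ≠ 0) (hq : q ≠ 0)
    (h : Polynomial.C (a : ℂ) * (p * Polynomial.derivative q)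
        = Polynomial.C (b : ℂ) * (Polynomial.derivative p * q)) :
    (∃ C : ℂ, C ≠ 0 ∧ p ^ b = Polynomial.C C * q ^ a) ∧
    (0 < p.natDegree → ∃ z : ℂ, p.IsRoot z ∧ q.IsRoot z) :=
  stmt10_general ℂ hb hp hq h
end
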